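/- arXiv:1507.03905 — 3 statements merged into one kernel-verified Lean document; each statement's English description precedes it below -/
import Mathlib

section
/- Let M be a metric space and f : M → M a continuous map satisfying the gluing orbit property. Assume the roof function ρ : M → (0,∞) is bounded from above and below, is uniformly continuous, and satisfies the bounded distortion condition: the constants C_ξ := sup_{x∈M} sup_{n≥1} sup_{y∈B(x,n,ξ)} |S_n ρ(x) − S_n ρ(y)| are finite and satisfy lim_{ξ→0} C_ξ = 0, where S_n ρ = Σ_{j=0}^{n−1} ρ∘f^j and B(x,n,ξ) = {y : d(f^j(x),f^j(y)) < ξ for 0 ≤ j ≤ n−1}. Then the suspension semiflow (X_t)_{t≥0} over f with roof ρ, acting on M_ρ with the Bowen–Walters distance, has the gluing orbit property. -/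
/-!
Why the suspension inherits gluing. Write `S n x` for the Birkhoff sums of the roof, and read
`(x, u)`, for any `u ≥ 0`, as the point reached from `(x, 0)` after time `u` (`SuspAt`). Given
orbit segments of the suspension starting at `(x i, s i)` and lasting `τ i`, let `n i` be the
lap number at the end of the `i`-th one. Gluing in the base, applied to the segments
`x i, …, f^[n i + 2] (x i)`, gives a point `z` whose iterate `w i = f^[L i] z` shadows `x i`.
The glued orbit is that of `(z, s 0)`, and it is made to sit at `(w i, s i)` at the moment the
`i`-th segment starts; this fixes the gluing times as
`S (n i + 2 + p i) (w i) + s (i + 1) - (s i + τ i)`. Bounded distortion says that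
`S j (w i)` and `S j (x i)` differ by at most a small `κ`, below the minimum `c` of the roof;
since the shadowing covers more than one lap beyond time `s i + τ i`, the gluing times are
nonnegative, and they are bounded because the roof and the `p i` are.

It remains to compare the orbits of `(w i, 0)` and `(x i, 0)` at equal times
(`bowenWalters_close`). As `κ < c`, their lap numbers differ by at most one. If these agree, a
horizontal and a vertical segment join the two points; otherwise one point is just below the
roof and the other just above the base, and a short chain through the identification
`(x, 1) ∼ (f x, 0)` joins them. Only upper bounds on the Bowen–Walters distance are needed, so
it suffices to exhibit chains.
-/

open MeasureTheory Filter Set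
open scoped ENNReal Topology

section GenericDefs

variable {α : Type*}

/-- Birkhoff sum of an observable along the orbit of a map. -/
noncomputable def birkhoff (f : α → α) (g : α → ℝ) (n : ℕ) (x : α) : ℝ :=
  ∑ j ∈ Finset.range n, g (f^[j] x)

/-- Bowen (dynamical) ball for a map, with respect to a distance function `dd`. -/
def mapBowenBall (dd : α → α → ℝ) (f : α → α) (x : α) (n : ℕ) (ε : ℝ) : Set α :=
  {y | ∀ j < n, dd (f^[j] x) (f^[j] y) < ε}

/-- Bowen (dynamical) ball for a semiflow. -/
def bowenBall (dd : α → α → ℝ) (Φ : ℝ → α → α) (x : α) (t ε : ℝ) : Set α :=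
  {y | ∀ s ∈ Set.Icc (0:ℝ) t, dd (Φ s x) (Φ s y) < ε}

/-- The gluing orbit property for a map. -/
def MapGluing (dd : α → α → ℝ) (f : α → α) : Prop :=
  ∀ ε > (0:ℝ), ∃ N : ℕ, 1 ≤ N ∧
    ∀ (k : ℕ) (x : Fin (k+1) → α) (n : Fin (k+1) → ℕ),
      ∃ (p : Fin (k+1) → ℕ) (z : α),
        (∀ i, p i ≤ N) ∧
        ∀ i : Fin (k+1), ∀ j ≤ n i,
          dd (f^[j + ∑ l ∈ Finset.univ.filter (fun l => l < i), (n l + p l)] z)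
            (f^[j] (x i)) ≤ ε

/-- The gluing orbit property for a semiflow. -/
def SemiflowGluing (dd : α → α → ℝ) (Φ : ℝ → α → α) : Prop :=
  ∀ ε > (0:ℝ), ∃ T > (0:ℝ),
    ∀ (k : ℕ) (x : Fin (k+1) → α) (τ : Fin (k+1) → ℝ), (∀ i, 0 ≤ τ i) →
      ∃ (p : Fin (k+1) → ℝ) (y : α),
        (∀ i, 0 ≤ p i ∧ p i ≤ T) ∧
        ∀ i : Fin (k+1), ∀ t ∈ Set.Icc (0:ℝ) (τ i),
          dd (Φ (t + ∑ l ∈ Finset.univ.filter (fun l => l < i), (τ l + p l)) y)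
            (Φ t (x i)) < ε

/-- The gluing orbit property for a flow: both the flow and the time-reversed flow
have the semiflow gluing orbit property. -/
def FlowGluing (dd : α → α → ℝ) (Φ : ℝ → α → α) : Prop :=
  SemiflowGluing dd Φ ∧ SemiflowGluing dd (fun t => Φ (-t))

/-- The specification property for a flow. -/
def FlowSpecification (dd : α → α → ℝ) (Φ : ℝ → α → α) : Prop :=
  ∀ ε > (0:ℝ), ∃ T > (0:ℝ),
    ∀ (k : ℕ) (a b : Fin (k+1) → ℝ) (P : ℝ → α),
      (∀ i, a i ≤ b i) →
      (∀ i : Fin k, T ≤ a i.succ - b i.castSucc) →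
      (∀ i : Fin (k+1), ∀ t₁ ∈ Set.Icc (a i) (b i), ∀ t₂ ∈ Set.Icc (a i) (b i),
        Φ t₂ (P t₁) = Φ t₁ (P t₂)) →
      ∃ x : α, ∀ i : Fin (k+1), ∀ t ∈ Set.Icc (a i) (b i), dd (Φ t x) (P t) < ε

/-- Maximal variation of Birkhoff integrals over Bowen balls (for a semiflow). -/
noncomputable def flowVariation (dd : α → α → ℝ) (Φ : ℝ → α → α) (ψ : α → ℝ)
    (t δ : ℝ) : ℝ :=
  sSup {v : ℝ | ∃ x y, y ∈ bowenBall dd Φ x t δ ∧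
    v = |(∫ s in (0:ℝ)..t, ψ (Φ s x)) - ∫ s in (0:ℝ)..t, ψ (Φ s y)|}

/-- Tempered variation of an observable with respect to a semiflow. -/
def FlowTempered (dd : α → α → ℝ) (Φ : ℝ → α → α) (ψ : α → ℝ) : Prop :=
  ∃ δ > (0:ℝ), Tendsto (fun t => flowVariation dd Φ ψ t δ / t) atTop (𝓝 0)

/-- Maximal variation of Birkhoff sums over Bowen balls (for a map). -/
noncomputable def mapVariation (dd : α → α → ℝ) (f : α → α) (g : α → ℝ)
    (n : ℕ) (δ : ℝ) : ℝ :=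
  sSup {v : ℝ | ∃ x y, y ∈ mapBowenBall dd f x n δ ∧
    v = |birkhoff f g n x - birkhoff f g n y|}

/-- Tempered variation of an observable with respect to a map. -/
def MapTempered (dd : α → α → ℝ) (f : α → α) (g : α → ℝ) : Prop :=
  ∃ δ > (0:ℝ), Tendsto (fun n : ℕ => mapVariation dd f g n δ / n) atTop (𝓝 0)

/-- Weak Gibbs property of a measure with respect to a semiflow and a potential. -/
def FlowWeakGibbs [MeasurableSpace α] (dd : α → α → ℝ) (Φ : ℝ → α → α)
    (μ : Measure α) (φ : α → ℝ) (P : ℝ) : Prop :=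
  ∀ ε > (0:ℝ), ∃ K : ℝ → ℝ, (∀ t, 0 < K t) ∧
    Tendsto (fun t => Real.log (K t) / t) atTop (𝓝 0) ∧
    ∀ x, ∀ t > (0:ℝ),
      (K t)⁻¹ ≤ (μ (bowenBall dd Φ x t ε)).toReal *
          Real.exp (t * P - ∫ s in (0:ℝ)..t, φ (Φ s x)) ∧
      (μ (bowenBall dd Φ x t ε)).toReal *
          Real.exp (t * P - ∫ s in (0:ℝ)..t, φ (Φ s x)) ≤ K t

/-- Gibbs property of a measure with respect to a semiflow and a potential. -/
def FlowGibbs [MeasurableSpace α] (dd : α → α → ℝ) (Φ : ℝ → α → α)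
    (μ : Measure α) (φ : α → ℝ) (P : ℝ) : Prop :=
  ∀ ε > (0:ℝ), ∃ K : ℝ, 0 < K ∧
    ∀ x, ∀ t > (0:ℝ),
      K⁻¹ ≤ (μ (bowenBall dd Φ x t ε)).toReal *
          Real.exp (t * P - ∫ s in (0:ℝ)..t, φ (Φ s x)) ∧
      (μ (bowenBall dd Φ x t ε)).toReal *
          Real.exp (t * P - ∫ s in (0:ℝ)..t, φ (Φ s x)) ≤ K

/-- Weak Gibbs property of a measure with respect to a map and a potential. -/
def MapWeakGibbs [MeasurableSpace α] (dd : α → α → ℝ) (f : α → α)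
    (μ : Measure α) (g : α → ℝ) (P : ℝ) : Prop :=
  ∀ ε > (0:ℝ), ∃ K : ℕ → ℝ, (∀ n, 0 < K n) ∧
    Tendsto (fun n : ℕ => Real.log (K n) / n) atTop (𝓝 0) ∧
    ∀ x, ∀ n : ℕ, 1 ≤ n →
      (K n)⁻¹ ≤ (μ (mapBowenBall dd f x n ε)).toReal *
          Real.exp (n * P - birkhoff f g n x) ∧
      (μ (mapBowenBall dd f x n ε)).toReal *
          Real.exp (n * P - birkhoff f g n x) ≤ K n

/-- Gibbs property of a measure with respect to a map and a potential. -/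
def MapGibbs [MeasurableSpace α] (dd : α → α → ℝ) (f : α → α)
    (μ : Measure α) (g : α → ℝ) (P : ℝ) : Prop :=
  ∀ ε > (0:ℝ), ∃ K : ℝ, 0 < K ∧
    ∀ x, ∀ n : ℕ, 1 ≤ n →
      K⁻¹ ≤ (μ (mapBowenBall dd f x n ε)).toReal *
          Real.exp (n * P - birkhoff f g n x) ∧
      (μ (mapBowenBall dd f x n ε)).toReal *
          Real.exp (n * P - birkhoff f g n x) ≤ K

/-- Entropy of a finite family of sets with respect to a measure. -/
noncomputable def partInfo [MeasurableSpace α] (μ : Measure α) (P : Finset (Set α)) : ℝ :=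
  ∑ A ∈ P, Real.negMulLog (μ A).toReal

open scoped Classical in
/-- The dynamical refinement `P ∨ f⁻¹ P ∨ ⋯ ∨ f⁻⁽ⁿ⁻¹⁾ P` of a finite partition. -/
noncomputable def dynRefine (f : α → α) (P : Finset (Set α)) (n : ℕ) : Finset (Set α) :=
  Finset.image (fun c : Fin n → {A // A ∈ P} => ⋂ j : Fin n, f^[(j : ℕ)] ⁻¹' (c j).val)
    Finset.univ

/-- A finite measurable partition. -/
def IsMeasPartition [MeasurableSpace α] (P : Finset (Set α)) : Prop :=
  (∀ A ∈ P, MeasurableSet A) ∧ (⋃₀ (P : Set (Set α))) = Set.univ ∧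
    ∀ A ∈ P, ∀ B ∈ P, A ≠ B → A ∩ B = ∅

/-- Kolmogorov–Sinai (measure-theoretic) entropy. -/
noncomputable def ksEntropy [MeasurableSpace α] (f : α → α) (μ : Measure α) : ℝ :=
  sSup {h : ℝ | ∃ P : Finset (Set α), IsMeasPartition P ∧
    h = ⨅ n : ℕ, partInfo μ (dynRefine f P (n+1)) / (n+1)}

/-- Invariance of a measure under a map. -/
def InvMeasure [MeasurableSpace α] (f : α → α) (μ : Measure α) : Prop :=
  ∀ s : Set α, MeasurableSet s → μ (f ⁻¹' s) = μ s

/-- Ergodicity of an invariant measure. -/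
def ErgodicInv [MeasurableSpace α] (f : α → α) (μ : Measure α) : Prop :=
  InvMeasure f μ ∧ ∀ s : Set α, MeasurableSet s → f ⁻¹' s = s → μ s = 0 ∨ μ s = 1

/-- Invariance of a measure under a (semi)flow. -/
def FlowInvMeasure [MeasurableSpace α] (Φ : ℝ → α → α) (μ : Measure α) : Prop :=
  ∀ t : ℝ, 0 ≤ t → InvMeasure (Φ t) μ

/-- Topological pressure of a (semi)flow with respect to a potential, defined via
the variational principle. -/
noncomputable def flowPressure [MeasurableSpace α] (Φ : ℝ → α → α) (φ : α → ℝ) : ℝ :=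
  sSup {c : ℝ | ∃ μ : Measure α, IsProbabilityMeasure μ ∧ FlowInvMeasure Φ μ ∧
    c = ksEntropy (Φ 1) μ + ∫ x, φ x ∂μ}

/-- Topological pressure of a map with respect to a potential, defined via the
variational principle. -/
noncomputable def mapPressure [MeasurableSpace α] (f : α → α) (g : α → ℝ) : ℝ :=
  sSup {c : ℝ | ∃ μ : Measure α, IsProbabilityMeasure μ ∧ InvMeasure f μ ∧
    c = ksEntropy f μ + ∫ x, g x ∂μ}

/-- Equilibrium state of a (semi)flow with respect to a potential. -/
def IsEquilibriumFlow [MeasurableSpace α] (Φ : ℝ → α → α) (φ : α → ℝ)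
    (μ : Measure α) : Prop :=
  IsProbabilityMeasure μ ∧ FlowInvMeasure Φ μ ∧
    ksEntropy (Φ 1) μ + ∫ x, φ x ∂μ = flowPressure Φ φ

/-- Equilibrium state of a map with respect to a potential. -/
def IsEquilibriumMap [MeasurableSpace α] (f : α → α) (g : α → ℝ)
    (μ : Measure α) : Prop :=
  IsProbabilityMeasure μ ∧ InvMeasure f μ ∧
    ksEntropy f μ + ∫ x, g x ∂μ = mapPressure f g

/-- The suspension semiflow over `f` with roof function `ρ`, acting on `α × ℝ`,
written in canonical coordinates: `(x,s)` flows to `(fⁿ x, s + t - Sₙρ(x))`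
where `n` is the lap number. -/
noncomputable def suspFlow (f : α → α) (ρ : α → ℝ) (t : ℝ) (p : α × ℝ) : α × ℝ :=
  (f^[sInf {n : ℕ | p.2 + t < birkhoff f ρ (n+1) p.1}] p.1,
    p.2 + t - birkhoff f ρ (sInf {n : ℕ | p.2 + t < birkhoff f ρ (n+1) p.1}) p.1)

/-- The phase space of the suspension semiflow with roof `ρ`, realized as the
fundamental domain `{(x,s) : 0 ≤ s < ρ x}`. -/
abbrev SuspSpace {α : Type*} (ρ : α → ℝ) := {p : α × ℝ // 0 ≤ p.2 ∧ p.2 < ρ p.1}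

/-- The suspension semiflow on its phase space. -/
noncomputable def suspFlowS (f : α → α) (ρ : α → ℝ) (t : ℝ) (z : SuspSpace ρ) :
    SuspSpace ρ :=
  if h : 0 ≤ (suspFlow f ρ t z.val).2 ∧ (suspFlow f ρ t z.val).2 < ρ (suspFlow f ρ t z.val).1
  then ⟨suspFlow f ρ t z.val, h⟩ else z

open scoped Classical in
/-- Elementary step cost in the definition of the Bowen–Walters distance on the unit
suspension: horizontal segments, vertical segments, and the identification
`(x,1) ∼ (f x, 0)` at zero cost. -/
noncomputable def bwStep (dd : α → α → ℝ) (f : α → α) (p q : α × ℝ) : ℝ≥0∞ :=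
  min (min
    (if p.2 = q.2 then ENNReal.ofReal ((1 - p.2) * dd p.1 q.1 + p.2 * dd (f p.1) (f q.1)) else ⊤)
    (if p.1 = q.1 then ENNReal.ofReal |p.2 - q.2| else ⊤))
    (if (q.1 = f p.1 ∧ p.2 = 1 ∧ q.2 = 0) ∨ (p.1 = f q.1 ∧ q.2 = 1 ∧ p.2 = 0) then 0 else ⊤)

/-- Total cost of a chain of elementary steps. -/
noncomputable def bwChainCost (dd : α → α → ℝ) (f : α → α) :
    α × ℝ → List (α × ℝ) → α × ℝ → ℝ≥0∞
  | p, [], q => bwStep dd f p q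
  | p, r :: l, q => bwStep dd f p r + bwChainCost dd f r l q

/-- The Bowen–Walters distance on the unit suspension: infimum of lengths of chains of
horizontal and vertical segments joining two points. -/
noncomputable def unitBW (dd : α → α → ℝ) (f : α → α) (p q : α × ℝ) : ℝ :=
  (⨅ l : List (α × ℝ), bwChainCost dd f p l q).toReal

/-- The Bowen–Walters distance for a general roof function, obtained by normalizing
the fiber coordinate. -/
noncomputable def bowenWalters (dd : α → α → ℝ) (f : α → α) (ρ : α → ℝ)
    (p q : α × ℝ) : ℝ :=
  unitBW dd f (p.1, p.2 / ρ p.1) (q.1, q.2 / ρ q.1)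

/-- The Bowen–Walters distance on the phase space of the suspension semiflow. -/
noncomputable def bowenWaltersS (dd : α → α → ℝ) (f : α → α) (ρ : α → ℝ)
    (z w : SuspSpace ρ) : ℝ :=
  bowenWalters dd f ρ z.val w.val

/-- The normalized measure `(μ × Leb)/∫ρ dμ` on the phase space of the suspension. -/
noncomputable def suspMeasure [MeasurableSpace α] (μ : Measure α) (ρ : α → ℝ) :
    Measure (SuspSpace ρ) :=
  (ENNReal.ofReal (∫ x, ρ x ∂μ))⁻¹ • Measure.comap Subtype.val (μ.prod volume)

/-- The reduced observable `ψ̄(x) = ∫_0^{ρ(x)} ψ(X_s(x,0)) ds` on the base of a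
suspension semiflow. -/
noncomputable def reducedObs (f : α → α) (ρ : α → ℝ) (ψ : SuspSpace ρ → ℝ) (x : α) : ℝ :=
  if h : 0 < ρ x then
    ∫ s in (0:ℝ)..(ρ x), ψ (suspFlowS f ρ s ⟨(x, 0), ⟨le_refl 0, h⟩⟩)
  else 0

/-- The set of Birkhoff-sum distortions of `ρ` over Bowen balls of radius `ξ`. -/
def distortionSet (dd : α → α → ℝ) (f : α → α) (ρ : α → ℝ) (ξ : ℝ) : Set ℝ :=
  {v : ℝ | ∃ x, ∃ y, ∃ n : ℕ, 1 ≤ n ∧ y ∈ mapBowenBall dd f x n ξ ∧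
    v = |birkhoff f ρ n x - birkhoff f ρ n y|}

/-- The distortion constant `C_ξ`. -/
noncomputable def distortionConst (dd : α → α → ℝ) (f : α → α) (ρ : α → ℝ) (ξ : ℝ) : ℝ :=
  sSup (distortionSet dd f ρ ξ)

/-- The set of Birkhoff-sum distortions of `ρ` over Bowen balls centered at `x`. -/
def pointDistortionSet (dd : α → α → ℝ) (f : α → α) (ρ : α → ℝ) (x : α) (ξ : ℝ) : Set ℝ :=
  {v : ℝ | ∃ y, ∃ n : ℕ, 1 ≤ n ∧ y ∈ mapBowenBall dd f x n ξ ∧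
    v = |birkhoff f ρ n x - birkhoff f ρ n y|}

/-- The pointwise distortion constant `C_ξ(x)`. -/
noncomputable def pointDistortionConst (dd : α → α → ℝ) (f : α → α) (ρ : α → ℝ)
    (x : α) (ξ : ℝ) : ℝ :=
  sSup (pointDistortionSet dd f ρ x ξ)

/-- The non-uniform gluing orbit property of a semiflow with respect to a measure. -/
def NonUniformGluing [MeasurableSpace α] (dd : α → α → ℝ) (Φ : ℝ → α → α)
    (ν : Measure α) : Prop :=
  ∃ T : α → ℝ → ℝ → ℝ,
    (∀ᵐ x ∂ν, (∀ t : ℝ, 0 ≤ t → ∀ ε > (0:ℝ), 0 < T x t ε) ∧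
      Tendsto (fun ε => Filter.limsup (fun t => T x t ε / t) atTop)
        (nhdsWithin 0 (Set.Ioi 0)) (𝓝 0)) ∧
    ∀ ε > (0:ℝ), ∀ k : ℕ,
      ∀ᵐ xs ∂(Measure.pi fun _ : Fin (k+1) => ν),
        ∀ τ : Fin (k+1) → ℝ, (∀ i, 0 ≤ τ i) →
          ∃ (p : Fin (k+1) → ℝ) (y : α),
            (∀ i, 0 ≤ p i ∧ p i ≤ T (xs i) (τ i) ε) ∧
            ∀ i : Fin (k+1), ∀ t ∈ Set.Icc (0:ℝ) (τ i),
              dd (Φ (t + ∑ l ∈ Finset.univ.filter (fun l => l < i), (τ l + p l)) y)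
                (Φ t (xs i)) < ε

/-- The empirical measure `(1/t)∫_0^t δ_{Φ_s(x)} ds` of an orbit segment. -/
noncomputable def empirical [MeasurableSpace α] (Φ : ℝ → α → α) (x : α) (t : ℝ) :
    Measure α :=
  (ENNReal.ofReal t)⁻¹ • Measure.map (fun s => Φ s x) ((volume : Measure ℝ).restrict (Set.Ioc 0 t))

/-- The metric `d̃` on measures induced by a countable family of test functions. -/
noncomputable def dTilde [MeasurableSpace α] (g : ℕ → α → ℝ) (μ ν : Measure α) : ℝ :=
  ∑' i : ℕ, (1/2 : ℝ)^i * |(∫ x, g i x ∂μ) - ∫ x, g i x ∂ν|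

end GenericDefs

section SuspensionGluing

variable {α : Type*}

/-- `SuspAt f ρ x u q` says that `q` is the canonical representative, in the fundamental
domain, of the point reached at time `u` by the orbit of `(x, 0)` under the suspension
semiflow. Allowing every `u ≥ 0`, not just `u < ρ x`, makes `(x, u)` meaningful above the
roof, so that base points can be exchanged without changing the height. -/
def SuspAt (f : α → α) (ρ : α → ℝ) (x : α) (u : ℝ) (q : α × ℝ) : Prop :=
  ∃ n : ℕ, birkhoff f ρ n x ≤ u ∧ u < birkhoff f ρ (n + 1) x ∧
    q = (f^[n] x, u - birkhoff f ρ n x)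

lemma birkhoff_zero (f : α → α) (ρ : α → ℝ) (x : α) : birkhoff f ρ 0 x = 0 := by
  simp [birkhoff]

lemma birkhoff_succ (f : α → α) (ρ : α → ℝ) (n : ℕ) (x : α) :
    birkhoff f ρ (n + 1) x = birkhoff f ρ n x + ρ (f^[n] x) := by
  simp [birkhoff, Finset.sum_range_succ]

lemma birkhoff_add (f : α → α) (ρ : α → ℝ) (m n : ℕ) (x : α) :
    birkhoff f ρ (m + n) x = birkhoff f ρ m x + birkhoff f ρ n (f^[m] x) :=
  birkhoffSum_add f ρ m n x

lemma birkhoff_strictMono {f : α → α} {ρ : α → ℝ} (hρ : ∀ x, 0 < ρ x) (x : α) :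
    StrictMono fun n => birkhoff f ρ n x := by
  refine strictMono_nat_of_lt_succ fun n => ?_
  rw [birkhoff_succ]
  linarith [hρ (f^[n] x)]

lemma birkhoff_le_mul {f : α → α} {ρ : α → ℝ} {R : ℝ} (hρ : ∀ x, ρ x ≤ R) (n : ℕ) (x : α) :
    birkhoff f ρ n x ≤ n * R := by
  have := Finset.sum_le_card_nsmul (Finset.range n) (fun j => ρ (f^[j] x)) R
    (fun j _ => hρ _)
  simpa [birkhoff] using this

lemma mul_le_birkhoff {f : α → α} {ρ : α → ℝ} {c : ℝ} (hρ : ∀ x, c ≤ ρ x) (n : ℕ) (x : α) :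
    n * c ≤ birkhoff f ρ n x := by
  have := Finset.card_nsmul_le_sum (Finset.range n) (fun j => ρ (f^[j] x)) c
    (fun j _ => hρ _)
  simpa [birkhoff] using this

/-- The first `n` with `u < S_{n+1} ρ(x)` is the lap number at time `u`. -/
lemma lap_spec {f : α → α} {ρ : α → ℝ} {c : ℝ} (hc : 0 < c) (hρ : ∀ x, c ≤ ρ x)
    (x : α) {u : ℝ} (hu : 0 ≤ u) :
    birkhoff f ρ (sInf {n : ℕ | u < birkhoff f ρ (n + 1) x}) x ≤ u ∧
      u < birkhoff f ρ (sInf {n : ℕ | u < birkhoff f ρ (n + 1) x} + 1) x := by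
  have hne : {n : ℕ | u < birkhoff f ρ (n + 1) x}.Nonempty := by
    obtain ⟨n, hn⟩ := exists_nat_gt (u / c)
    refine ⟨n, ?_⟩
    have h1 := mul_le_birkhoff (f := f) hρ (n + 1) x
    rw [div_lt_iff₀ hc] at hn
    push_cast at h1
    show u < _
    linarith
  refine ⟨?_, Nat.sInf_mem hne⟩
  rcases h : sInf {n : ℕ | u < birkhoff f ρ (n + 1) x} with _ | m
  · simpa [birkhoff_zero] using hu
  · have : m ∉ {n : ℕ | u < birkhoff f ρ (n + 1) x} :=
      Nat.notMem_of_lt_sInf (by omega)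
    simpa using this

lemma exists_suspAt {f : α → α} {ρ : α → ℝ} {c : ℝ} (hc : 0 < c) (hρ : ∀ x, c ≤ ρ x)
    (x : α) {u : ℝ} (hu : 0 ≤ u) : ∃ q : SuspSpace ρ, SuspAt f ρ x u q.val := by
  obtain ⟨h1, h2⟩ := lap_spec (f := f) hc hρ x hu
  rw [birkhoff_succ] at h2
  refine ⟨⟨_, ⟨?_, ?_⟩⟩, _, h1, by rwa [birkhoff_succ], rfl⟩ <;> dsimp only <;> linarith

lemma suspAt_self (f : α → α) {ρ : α → ℝ} (z : SuspSpace ρ) :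
    SuspAt f ρ z.val.1 z.val.2 z.val :=
  ⟨0, by simpa [birkhoff_zero] using z.2.1, by simpa [birkhoff] using z.2.2,
    by simp [birkhoff_zero]⟩

lemma suspAt_flow {f : α → α} {ρ : α → ℝ} {c : ℝ} (hc : 0 < c) (hρ : ∀ x, c ≤ ρ x)
    {x : α} {u t : ℝ} (ht : 0 ≤ t) {z : SuspSpace ρ} (hz : SuspAt f ρ x u z.val) :
    SuspAt f ρ x (u + t) (suspFlowS f ρ t z).val := by
  obtain ⟨n, h1, h2, h3⟩ := hz
  have hz0 := z.2.1
  obtain ⟨l1, l2⟩ := lap_spec (f := f) hc hρ z.val.1 (add_nonneg hz0 ht)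
  set m := sInf {n : ℕ | z.val.2 + t < birkhoff f ρ (n + 1) z.val.1} with hm
  have hflow : suspFlow f ρ t z.val =
      (f^[m] z.val.1, z.val.2 + t - birkhoff f ρ m z.val.1) := rfl
  have hdom : 0 ≤ (suspFlow f ρ t z.val).2 ∧
      (suspFlow f ρ t z.val).2 < ρ (suspFlow f ρ t z.val).1 := by
    rw [hflow]
    rw [birkhoff_succ] at l2
    constructor <;> dsimp only <;> linarith
  rw [suspFlowS, dif_pos hdom]
  dsimp only
  rw [hflow]
  clear_value m
  rw [h3] at l1 l2 ⊢
  dsimp only at l1 l2 ⊢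
  refine ⟨n + m, ?_, ?_, ?_⟩
  · rw [birkhoff_add]; linarith
  · rw [add_assoc, birkhoff_add]; linarith
  · rw [birkhoff_add, add_comm n m, Function.iterate_add_apply]
    congr 1
    ring

lemma suspAt_shift {f : α → α} {ρ : α → ℝ} (hρ : ∀ x, 0 < ρ x) {z : α} {N : ℕ} {u : ℝ}
    (hu : 0 ≤ u) {q : α × ℝ} (hq : SuspAt f ρ z (birkhoff f ρ N z + u) q) :
    SuspAt f ρ (f^[N] z) u q := by
  obtain ⟨n, h1, h2, h3⟩ := hq
  have hN : N < n + 1 := (birkhoff_strictMono (f := f) hρ z).lt_iff_lt.1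
    (show birkhoff f ρ N z < birkhoff f ρ (n + 1) z by linarith)
  obtain ⟨m, rfl⟩ := Nat.exists_eq_add_of_le (Nat.le_of_lt_succ hN)
  rw [birkhoff_add] at h1
  rw [add_assoc, birkhoff_add] at h2
  refine ⟨m, by linarith, by linarith, ?_⟩
  rw [h3, birkhoff_add, add_comm N m, Function.iterate_add_apply]
  congr 1
  ring

lemma unitBW_le {dd : α → α → ℝ} {f : α → α} {p q : α × ℝ} {r : ℝ} (hr : 0 ≤ r)
    (l : List (α × ℝ)) (h : bwChainCost dd f p l q ≤ ENNReal.ofReal r) :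
    unitBW dd f p q ≤ r :=
  ENNReal.toReal_le_of_le_ofReal hr ((iInf_le _ l).trans h)

lemma bwStep_horizontal (dd : α → α → ℝ) (f : α → α) (x y : α) (a : ℝ) :
    bwStep dd f (x, a) (y, a) ≤
      ENNReal.ofReal ((1 - a) * dd x y + a * dd (f x) (f y)) :=
  (min_le_left _ _).trans ((min_le_left _ _).trans (by simp))

lemma bwStep_vertical (dd : α → α → ℝ) (f : α → α) (x : α) (a b : ℝ) :
    bwStep dd f (x, a) (x, b) ≤ ENNReal.ofReal |a - b| :=
  (min_le_left _ _).trans ((min_le_right _ _).trans (by simp))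

lemma bwStep_up (dd : α → α → ℝ) (f : α → α) (x : α) :
    bwStep dd f (x, 1) (f x, 0) = 0 :=
  le_antisymm ((min_le_right _ _).trans (by simp)) zero_le

lemma bwStep_down (dd : α → α → ℝ) (f : α → α) (x : α) :
    bwStep dd f (f x, 0) (x, 1) = 0 :=
  le_antisymm ((min_le_right _ _).trans (by simp)) zero_le

/-- Points in the same lap: one horizontal and one vertical segment. -/
lemma unitBW_same {M : Type*} [MetricSpace M] (f : M → M) {x y : M} {a b δ η : ℝ}
    (ha : 0 ≤ a) (ha' : a ≤ 1) (h0 : dist x y ≤ δ) (h1 : dist (f x) (f y) ≤ δ)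
    (hab : |a - b| ≤ η) : unitBW dist f (x, a) (y, b) ≤ δ + η := by
  have hδ : 0 ≤ δ := dist_nonneg.trans h0
  have hη : 0 ≤ η := (abs_nonneg _).trans hab
  refine unitBW_le (by positivity) [(y, a)] ?_
  simp only [bwChainCost]
  rw [ENNReal.ofReal_add hδ hη]
  refine add_le_add ((bwStep_horizontal _ _ _ _ _).trans (ENNReal.ofReal_le_ofReal ?_))
    ((bwStep_vertical _ _ _ _ _).trans (ENNReal.ofReal_le_ofReal hab))
  nlinarith

/-- Points in consecutive laps: go up to the roof, cross it, move horizontally at height `0`,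
and go up again. -/
lemma unitBW_up {M : Type*} [MetricSpace M] (f : M → M) {x y : M} {a b δ η : ℝ}
    (ha : a ≤ 1) (ha' : 1 - a ≤ η) (hb : 0 ≤ b) (hb' : b ≤ η) (h : dist (f x) y ≤ δ) :
    unitBW dist f (x, a) (y, b) ≤ δ + 2 * η := by
  have hδ : 0 ≤ δ := dist_nonneg.trans h
  have hη : 0 ≤ η := hb.trans hb'
  refine unitBW_le (by positivity) [(x, 1), (f x, 0), (y, 0)] ?_
  simp only [bwChainCost, bwStep_up, zero_add]
  have e : δ + 2 * η = η + (δ + η) := by ring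
  rw [e, ENNReal.ofReal_add hη (by positivity), ENNReal.ofReal_add hδ hη]
  refine add_le_add ((bwStep_vertical _ _ _ _ _).trans (ENNReal.ofReal_le_ofReal ?_))
    (add_le_add ((bwStep_horizontal _ _ _ _ _).trans (ENNReal.ofReal_le_ofReal ?_))
    ((bwStep_vertical _ _ _ _ _).trans (ENNReal.ofReal_le_ofReal ?_)))
  · rw [abs_le]; constructor <;> linarith
  · simpa using h
  · rw [abs_le]; constructor <;> linarith

/-- The reverse of `unitBW_up`. -/
lemma unitBW_down {M : Type*} [MetricSpace M] (f : M → M) {x y : M} {a b δ η : ℝ}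
    (ha : a ≤ 1) (ha' : 1 - a ≤ η) (hb : 0 ≤ b) (hb' : b ≤ η) (h : dist y (f x) ≤ δ) :
    unitBW dist f (y, b) (x, a) ≤ δ + 2 * η := by
  have hδ : 0 ≤ δ := dist_nonneg.trans h
  have hη : 0 ≤ η := hb.trans hb'
  refine unitBW_le (by positivity) [(y, 0), (f x, 0), (x, 1)] ?_
  simp only [bwChainCost, bwStep_down, zero_add]
  have e : δ + 2 * η = η + (δ + η) := by ring
  rw [e, ENNReal.ofReal_add hη (by positivity), ENNReal.ofReal_add hδ hη]
  refine add_le_add ((bwStep_vertical _ _ _ _ _).trans (ENNReal.ofReal_le_ofReal ?_))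
    (add_le_add ((bwStep_horizontal _ _ _ _ _).trans (ENNReal.ofReal_le_ofReal ?_))
    ((bwStep_vertical _ _ _ _ _).trans (ENNReal.ofReal_le_ofReal ?_)))
  · rw [abs_le]; constructor <;> linarith
  · simpa using h
  · rw [abs_le]; constructor <;> linarith

/-- If `w` shadows `x` under `f` and the Birkhoff sums of the roof stay `κ`-close with `κ`
below the minimal roof height `c`, then at equal times the suspension orbits of `(w, 0)` and
`(x, 0)` have lap numbers differing by at most one and are Bowen–Walters close. -/
lemma bowenWalters_close {M : Type*} [MetricSpace M] {f : M → M} {ρ : M → ℝ} {c κ δ : ℝ}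
    (hc : 0 < c) (hκ : κ < c) (hρ : ∀ x, c ≤ ρ x) {x w : M} {u : ℝ} {m : ℕ}
    {q q' : M × ℝ} (hd : ∀ j ≤ m + 2, dist (f^[j] w) (f^[j] x) ≤ δ)
    (hS : ∀ j ≤ m + 2, |birkhoff f ρ j x - birkhoff f ρ j w| ≤ κ)
    (hm : u < birkhoff f ρ (m + 1) x) (hq : SuspAt f ρ w u q) (hq' : SuspAt f ρ x u q') :
    bowenWalters dist f ρ q q' ≤ δ + 3 * (κ / c) := by
  have hpos : ∀ x, 0 < ρ x := fun x => hc.trans_le (hρ x)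
  have hκ0 : 0 ≤ κ := (abs_nonneg _).trans (hS 0 (by omega))
  have hκc : 0 ≤ κ / c := div_nonneg hκ0 hc.le
  have hS' : ∀ j ≤ m + 2, birkhoff f ρ j x - birkhoff f ρ j w ≤ κ ∧
      birkhoff f ρ j w - birkhoff f ρ j x ≤ κ := fun j hj => by
    have := abs_le.1 (hS j hj)
    constructor <;> linarith
  -- A height of at most `κ` becomes at most `κ / c` after normalization by the roof.
  have hnorm : ∀ (p : M) (v : ℝ), v ≤ κ → v / ρ p ≤ κ / c := fun p v hv =>
    div_le_div₀ hκ0 hv hc (hρ p)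
  obtain ⟨b, b1, b2, rfl⟩ := hq
  obtain ⟨a, a1, a2, rfl⟩ := hq'
  have ham : a < m + 1 := (birkhoff_strictMono (f := f) hpos x).lt_iff_lt.1
    (show birkhoff f ρ a x < birkhoff f ρ (m + 1) x by linarith)
  have hba : b < a + 2 := by
    refine (birkhoff_strictMono (f := f) hpos w).lt_iff_lt.1
      (show birkhoff f ρ b w < birkhoff f ρ (a + 2) w from ?_)
    have h1 := birkhoff_succ f ρ (a + 1) x
    have h2 := (hS' (a + 2) (by omega)).1
    have h3 := hρ (f^[a + 1] x)
    linarith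
  have hab : a < b + 2 := by
    by_contra! hcon
    obtain ⟨e, rfl⟩ : ∃ e, a = e + 1 := ⟨a - 1, by omega⟩
    have h0 : birkhoff f ρ (b + 1) w ≤ birkhoff f ρ e w :=
      (birkhoff_strictMono (f := f) hpos w).monotone (by omega)
    have h1 := birkhoff_succ f ρ e x
    have h2 := (hS' e (by omega)).2
    have h3 := hρ (f^[e] x)
    linarith
  have haS := birkhoff_succ f ρ a x
  have hbS := birkhoff_succ f ρ b w
  have hpx := hpos (f^[a] x)
  have hpw := hpos (f^[b] w)
  have rx0 : 0 ≤ (u - birkhoff f ρ a x) / ρ (f^[a] x) := div_nonneg (by linarith) hpx.le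
  have rx1 : (u - birkhoff f ρ a x) / ρ (f^[a] x) ≤ 1 := by
    rw [div_le_one hpx]; linarith
  have rw0 : 0 ≤ (u - birkhoff f ρ b w) / ρ (f^[b] w) := div_nonneg (by linarith) hpw.le
  have rw1 : (u - birkhoff f ρ b w) / ρ (f^[b] w) ≤ 1 := by
    rw [div_le_one hpw]; linarith
  have hx1 : 1 - (u - birkhoff f ρ a x) / ρ (f^[a] x) =
      (birkhoff f ρ (a + 1) x - u) / ρ (f^[a] x) := by
    rw [haS]; field_simp; ring
  have hw1 : 1 - (u - birkhoff f ρ b w) / ρ (f^[b] w) =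
      (birkhoff f ρ (b + 1) w - u) / ρ (f^[b] w) := by
    rw [hbS]; field_simp; ring
  unfold bowenWalters
  dsimp only
  obtain h | h | h : b = a ∨ b = a + 1 ∨ a = b + 1 := by omega
  · subst h
    have hd1 := hd (b + 1) (by omega)
    rw [Function.iterate_succ_apply', Function.iterate_succ_apply'] at hd1
    refine unitBW_same f rw0 rw1 (hd b (by omega)) hd1 ?_
    have s0 := hS' b (by omega)
    have s1 := hS' (b + 1) (by omega)
    set r := (u - birkhoff f ρ b w) / ρ (f^[b] w) with hr
    have hr' : u - birkhoff f ρ b w = r * ρ (f^[b] w) := by rw [hr, div_mul_cancel₀ _ hpw.ne']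
    have e : r - (u - birkhoff f ρ b x) / ρ (f^[b] x) =
        ((birkhoff f ρ b x - birkhoff f ρ b w) + r * (ρ (f^[b] x) - ρ (f^[b] w))) /
          ρ (f^[b] x) := by
      rw [eq_div_iff hpx.ne', sub_mul, div_mul_cancel₀ _ hpx.ne']
      linarith
    have hρd : |ρ (f^[b] x) - ρ (f^[b] w)| ≤ 2 * κ := by
      rw [abs_le]; constructor <;> linarith
    rw [e, abs_div, abs_of_pos hpx, show 3 * (κ / c) = 3 * κ / c by ring]
    refine div_le_div₀ (by positivity) ?_ hc (hρ _)
    refine (abs_add_le _ _).trans ?_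
    have h1 := hS b (by omega)
    have h2 : |r * (ρ (f^[b] x) - ρ (f^[b] w))| ≤ 1 * (2 * κ) := by
      rw [abs_mul, abs_of_nonneg rw0]
      exact mul_le_mul rw1 hρd (abs_nonneg _) zero_le_one
    linarith
  · subst h
    have hd1 := hd (a + 1) (by omega)
    rw [Function.iterate_succ_apply' f a x] at hd1
    have s1 := hS' (a + 1) (by omega)
    have := unitBW_down f (δ := δ) rx1 (hx1 ▸ hnorm _ _ (by linarith)) rw0
      (hnorm _ _ (by linarith)) hd1
    linarith
  · subst h
    have hd1 := hd (b + 1) (by omega)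
    rw [Function.iterate_succ_apply' f b w] at hd1
    have s1 := hS' (b + 1) (by omega)
    have := unitBW_up f (δ := δ) rw1 (hw1 ▸ hnorm _ _ (by linarith)) rx0
      (hnorm _ _ (by linarith)) hd1
    linarith

lemma sum_filter_lt_succ {k : ℕ} {β : Type*} [AddCommMonoid β] (g : Fin (k + 1) → β)
    (j : ℕ) (hj : j + 1 < k + 1) :
    ∑ l ∈ Finset.univ.filter (fun l => l < (⟨j + 1, hj⟩ : Fin (k + 1))), g l =
      ∑ l ∈ Finset.univ.filter (fun l => l < (⟨j, by omega⟩ : Fin (k + 1))), g l +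
        g ⟨j, by omega⟩ := by
  refine Eq.trans ?_ ((Finset.sum_insert (by simp)).trans (add_comm _ _))
  congr 1
  ext l
  simp only [Finset.mem_filter, Finset.mem_univ, true_and, Finset.mem_insert, Fin.lt_def,
    Fin.ext_iff]
  omega

lemma abs_birkhoff_sub_le {f : α → α} {dd : α → α → ℝ} {ρ : α → ℝ} {ξ κ : ℝ}
    (hfin : BddAbove (distortionSet dd f ρ ξ)) (hκ : 0 ≤ κ)
    (hC : distortionConst dd f ρ ξ ≤ κ) {x y : α} {n : ℕ}
    (hy : y ∈ mapBowenBall dd f x n ξ) : |birkhoff f ρ n x - birkhoff f ρ n y| ≤ κ := by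
  rcases Nat.eq_zero_or_pos n with rfl | hn
  · simpa [birkhoff_zero] using hκ
  · exact (le_csSup hfin ⟨x, y, n, hn, hy, rfl⟩).trans hC

end SuspensionGluing

/-- if the base map has the gluing orbit property and the roof function
is bounded above and below, uniformly continuous and has bounded distortion, then the
suspension semiflow has the gluing orbit property with respect to the Bowen–Walters
distance. -/
theorem suspension_gluing {M : Type*} [MetricSpace M]
    (f : M → M) (hf : Continuous f) (hglue : MapGluing dist f)
    (ρ : M → ℝ)
    (hbound : ∃ c Cr : ℝ, 0 < c ∧ ∀ x, c ≤ ρ x ∧ ρ x ≤ Cr)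
    (hucont : ∀ ε > (0:ℝ), ∃ δ > (0:ℝ), ∀ x y : M, dist x y < δ → |ρ x - ρ y| < ε)
    (hCfin : ∀ ξ > (0:ℝ), BddAbove (distortionSet dist f ρ ξ))
    (hCto0 : Filter.Tendsto (fun ξ => distortionConst dist f ρ ξ)
      (nhdsWithin 0 (Set.Ioi 0)) (𝓝 0)) :
    SemiflowGluing (bowenWaltersS dist f ρ) (suspFlowS f ρ) := by
  obtain ⟨c, R, hc, hρ⟩ := hbound
  have hcρ : ∀ x, c ≤ ρ x := fun x => (hρ x).1
  have hpos : ∀ x, 0 < ρ x := fun x => hc.trans_le (hcρ x)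
  intro ε hε
  -- `κ < c` keeps lap numbers within one of each other, and `ξ / 2 + 3 κ / c < ε`.
  set κ : ℝ := min (c / 2) (ε * c / 8) with hκdef
  have hκ0 : 0 < κ := by positivity
  have hκc : κ < c := (min_le_left _ _).trans_lt (by linarith)
  have hκε : κ / c ≤ ε / 8 := by
    rw [div_le_iff₀ hc]
    exact (min_le_right _ _).trans (by linarith)
  obtain ⟨ξ, ⟨hξC, hξε⟩, hξ0⟩ := (((hCto0.eventually_lt_const hκ0).and
    (Filter.Eventually.filter_mono nhdsWithin_le_nhds (eventually_lt_nhds hε))).and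
    self_mem_nhdsWithin).exists
  have hξ0 : 0 < ξ := hξ0
  obtain ⟨N, hN1, hN⟩ := hglue (ξ / 2) (by positivity)
  refine ⟨κ + (N + 3) * (|R| + 1), by positivity, ?_⟩
  intro k x τ hτ
  -- `n i` is the lap number of the `i`-th orbit segment at its end. The segment is shadowed
  -- for two more laps, so that the height `c` of the extra lap absorbs the distortion `κ`
  -- and the gluing times come out nonnegative.
  choose n hn1 hn2 using fun i : Fin (k + 1) =>
    (⟨_, lap_spec (f := f) hc hcρ (x i).val.1 (add_nonneg (x i).2.1 (hτ i))⟩ :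
      ∃ n, birkhoff f ρ n (x i).val.1 ≤ (x i).val.2 + τ i ∧
        (x i).val.2 + τ i < birkhoff f ρ (n + 1) (x i).val.1)
  obtain ⟨p, z, hp, hz⟩ := hN k (fun i => (x i).val.1) (fun i => n i + 2)
  set L : Fin (k + 1) → ℕ := fun i =>
    ∑ l ∈ Finset.univ.filter (fun l => l < i), (n l + 2 + p l) with hL
  have hd : ∀ i, ∀ j ≤ n i + 2,
      dist (f^[j] (f^[L i] z)) (f^[j] (x i).val.1) ≤ ξ / 2 := by
    intro i j hj
    rw [← Function.iterate_add_apply]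
    exact hz i j hj
  have hS : ∀ i, ∀ j ≤ n i + 2,
      |birkhoff f ρ j (x i).val.1 - birkhoff f ρ j (f^[L i] z)| ≤ κ := by
    intro i j hj
    refine abs_birkhoff_sub_le (hCfin ξ hξ0) hκ0.le hξC.le fun l hl => ?_
    rw [dist_comm]
    exact (hd i l (by omega)).trans_lt (by linarith)
  -- The gluing time takes the orbit of `(z, 0)` from height `s i + τ i` over `f^[L i] z` to
  -- height `s (i + 1)` over `f^[L (i + 1)] z`; beyond the last index that height is taken `0`.
  set s : ℕ → ℝ := fun j => if h : j < k + 1 then (x ⟨j, h⟩).val.2 else 0 with hs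
  have hs0 : ∀ j, 0 ≤ s j := by
    intro j
    simp only [hs]
    split_ifs with h
    · exact (x ⟨j, h⟩).2.1
    · exact le_rfl
  have hsR : ∀ j, s j ≤ |R| + 1 := by
    intro j
    simp only [hs]
    split_ifs with h
    · linarith [(x ⟨j, h⟩).2.2, (hρ (x ⟨j, h⟩).val.1).2, le_abs_self R]
    · positivity
  have hsx : ∀ i : Fin (k + 1), s i = (x i).val.2 := fun i => dif_pos i.2
  set P : Fin (k + 1) → ℝ := fun i =>
    birkhoff f ρ (n i + 2 + p i) (f^[L i] z) + s (i + 1) - s i - τ i with hP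
  obtain ⟨y, hy⟩ := exists_suspAt (f := f) hc hcρ z (hs0 0)
  have hPb : ∀ i, 0 ≤ P i ∧ P i ≤ κ + (N + 3) * (|R| + 1) := by
    intro i
    have b1 := birkhoff_add f ρ (n i + 2) (p i) (f^[L i] z)
    have b2 := birkhoff_le_mul (f := f) (fun x => (hρ x).2.trans
      ((le_abs_self R).trans (le_add_of_nonneg_right zero_le_one))) (2 + p i)
      (f^[n i] (f^[L i] z))
    have b3 := birkhoff_add f ρ (n i) (2 + p i) (f^[L i] z)
    have b4 := mul_le_birkhoff (f := f) (fun x => (hpos x).le) (p i)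
      (f^[n i + 2] (f^[L i] z))
    have b5 := birkhoff_succ f ρ (n i + 1) (x i).val.1
    have b6 := hcρ (f^[n i + 1] (x i).val.1)
    have b7 := abs_le.1 (hS i (n i) (by omega))
    have b8 := abs_le.1 (hS i (n i + 2) le_rfl)
    have hpN : (p i : ℝ) ≤ N := by exact_mod_cast hp i
    have b9 : ((2 + p i : ℕ) : ℝ) * (|R| + 1) ≤ (2 + N) * (|R| + 1) := by
      push_cast
      gcongr
    rw [← add_assoc] at b3
    have e1 := hs0 (i + 1)
    have e2 := hsR (i + 1)
    have e3 := hsx i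
    have e4 := hn1 i
    have e5 := hn2 i
    constructor
    · simp only [hP]; linarith
    · simp only [hP]; linarith
  refine ⟨P, y, hPb, fun i t ht => ?_⟩
  have htel : ∀ (j : ℕ) (hj : j < k + 1),
      ∑ l ∈ Finset.univ.filter (fun l => l < (⟨j, hj⟩ : Fin (k + 1))), (τ l + P l) =
        birkhoff f ρ (L ⟨j, hj⟩) z + s j - s 0 := by
    intro j
    induction j with
    | zero =>
      intro hj
      simp [hL, birkhoff_zero]
    | succ j ih =>
      intro hj
      have hLs : L ⟨j + 1, hj⟩ = L ⟨j, by omega⟩ +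
          (n ⟨j, by omega⟩ + 2 + p ⟨j, by omega⟩) := sum_filter_lt_succ _ j hj
      rw [sum_filter_lt_succ _ j hj, ih, hLs, birkhoff_add]
      simp only [hP]
      ring
  have hti : ∑ l ∈ Finset.univ.filter (fun l => l < i), (τ l + P l) =
      birkhoff f ρ (L i) z + s i - s 0 := htel i i.2
  have hθ : 0 ≤ ∑ l ∈ Finset.univ.filter (fun l => l < i), (τ l + P l) :=
    Finset.sum_nonneg fun l _ => add_nonneg (hτ l) (hPb l).1
  have hyt := suspAt_flow hc hcρ (add_nonneg ht.1 hθ) hy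
  rw [show s 0 + (t + ∑ l ∈ Finset.univ.filter (fun l => l < i), (τ l + P l)) =
    birkhoff f ρ (L i) z + ((x i).val.2 + t) by rw [hti, hsx]; ring] at hyt
  have hw := suspAt_shift hpos (add_nonneg (x i).2.1 ht.1) hyt
  have hx := suspAt_flow hc hcρ ht.1 (suspAt_self f (x i))
  have hclose := bowenWalters_close hc hκc hcρ (hd i) (hS i)
    (lt_of_le_of_lt (by linarith [ht.2]) (hn2 i)) hw hx
  refine lt_of_le_of_lt hclose ?_
  linarith
end

section
/- Let f : M → M be a continuous map on a compact metric space M, let η be an f-invariant Borel probability measure and let ψ, φ : M → ℝ be functions in L¹(η). Given ε>0 there exist f-invariant ergodic probability measures η_1,…,η_n and positive numbers a_1,…,a_n with Σ_{i=1}^n a_i = 1 such that: (i) |∫ψ dη − ∫ψ d(Σ_{i=1}^n a_i η_i)| < ε; (ii) |∫φ dη − ∫φ d(Σ_{i=1}^n a_i η_i)| < ε; and (iii) h_η(f) ≤ Σ_{i=1}^n a_i h_{η_i}(f) + ε. -/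
/-!
The ergodic components of `η` are its conditional measures `η_x` given the σ-algebra of strictly
invariant sets (`ergComp`). Almost every `η_x` is invariant, and the mean ergodic theorem, applied
to the countably many sets of a generating algebra, shows that it is ergodic: along a subsequence
the visit frequencies of such a set `A` converge in `L¹(η_x)` to a constant, so that
`η_x (A ∩ B) = η_x A * η_x B` for every invariant `B` (`ae_ergComp_ergodicInv`).

For a fixed finite partition `X`, the entropy rate satisfies the Jacobs inequality
`h_η(f, X) ≤ ∫ h_{η_x}(f, X) dη(x)` (`hrate_le_integral_hrate`). Conditioning on an invariant finite
partition `β` does not change the entropy rate, so `h_η(f, X) ≤ H_η(X^m | β) / m`. If `β` is obtained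
by discretising `x ↦ (η_x(X^m = c))_c`, the right-hand side is close to `∫ H_{η_x}(X^m) / m dη(x)` by
uniform continuity of `t ↦ -t log t`; then `m → ∞`.

Thus, for a partition `X` nearly realising `h_η(f)`, the mean over `η` of the map
`x ↦ (∫ ψ dη_x, ∫ φ dη_x, h_{η_x}(f, X)) ∈ ℝ³` has the required properties. It lies in the closed
convex hull of the values of this map on any set of full measure, and is therefore approximated by a
finite convex combination of such values (`exists_convex_approx`).

The entropy `ksEntropy` is a real supremum, which is `0` by convention when the set `rateSet` of
entropy rates is unbounded. If this happens for `η`, the entropy estimate is trivial. Otherwise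
`h_{η_x}(f, X) ≤ h_{η_x}(f)` requires boundedness for the components too. This follows from the
reverse inequality `∫ h_{η_x}(f, X) dη(x) ≤ h_η(f, X)` (concavity of `-t log t`) and monotone
convergence along an increasing sequence of finite partitions that generate the Borel σ-algebra
(`ae_bddAbove_rateSet`), since up to an additive constant `1` every entropy rate is dominated by that
of a partition in this sequence (`exists_hrate_le_genPart`).
-/

open MeasureTheory Filter Set
open scoped ENNReal Topology

namespace ErgApprox

set_option linter.unusedSectionVars false

/-! ### Entropy of finite partitions -/

section Labels

variable {Ω ι κ τ : Type*} [MeasurableSpace Ω]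

/-- A map into a finite label set is `FinMeas` when all its fibres are measurable, i.e. when it
encodes a finite measurable partition. -/
def FinMeas (X : Ω → ι) : Prop := ∀ i, MeasurableSet (X ⁻¹' {i})

/-- Shannon entropy of the partition into the fibres of `X`. -/
noncomputable def ent [Fintype ι] (μ : Measure Ω) (X : Ω → ι) : ℝ :=
  ∑ i, Real.negMulLog (μ.real (X ⁻¹' {i}))

/-- Conditional entropy `H(X | Y) = H(X, Y) - H(Y)`. -/
noncomputable def cent [Fintype ι] [Fintype κ] (μ : Measure Ω) (X : Ω → ι) (Y : Ω → κ) : ℝ :=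
  ent μ (fun x => (X x, Y x)) - ent μ Y

lemma FinMeas.preimage [Finite ι] {X : Ω → ι} (hX : FinMeas X) (S : Set ι) :
    MeasurableSet (X ⁻¹' S) := by
  have : X ⁻¹' S = ⋃ i ∈ S, X ⁻¹' {i} := by ext; simp
  rw [this]
  exact MeasurableSet.biUnion (Set.to_countable S) fun i _ => hX i

lemma FinMeas.comp [Finite ι] {X : Ω → ι} (hX : FinMeas X) (g : ι → κ) :
    FinMeas (fun x => g (X x)) := fun k => hX.preimage (g ⁻¹' {k})

lemma FinMeas.prodMk {X : Ω → ι} {Y : Ω → κ} (hX : FinMeas X) (hY : FinMeas Y) :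
    FinMeas (fun x => (X x, Y x)) := by
  rintro ⟨i, j⟩
  have : (fun x => (X x, Y x)) ⁻¹' {(i, j)} = X ⁻¹' {i} ∩ Y ⁻¹' {j} := by ext; simp
  rw [this]
  exact (hX i).inter (hY j)

lemma FinMeas.pi {α : Type*} [Finite α] {X : α → Ω → ι} (hX : ∀ a, FinMeas (X a)) :
    FinMeas (fun x a => X a x) := by
  intro c
  have : (fun x a => X a x) ⁻¹' {c} = ⋂ a, X a ⁻¹' {c a} := by
    ext; simp [funext_iff]
  rw [this]
  have := Finite.to_countable (α := α)
  exact MeasurableSet.iInter fun a => hX a _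

lemma FinMeas.comp_measurable {X : Ω → ι} (hX : FinMeas X) {f : Ω → Ω} (hf : Measurable f) :
    FinMeas (fun x => X (f x)) := fun i => hf (hX i)

variable [Fintype ι] [Fintype κ] [Fintype τ] {μ : Measure Ω} [IsProbabilityMeasure μ]

lemma sum_real_fibers {X : Ω → ι} (hX : FinMeas X) : ∑ i, μ.real (X ⁻¹' {i}) = 1 := by
  rw [← measureReal_biUnion_finset]
  · have : (⋃ b ∈ Finset.univ, X ⁻¹' {b}) = univ := by ext; simp
    rw [this, probReal_univ]
  · intro i _ j _ hij
    exact Disjoint.preimage X (by simpa using hij)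
  · intro i _; exact hX i

lemma sum_real_fibers_comp {X : Ω → ι} (hX : FinMeas X) (g : ι → κ) (F : κ → ℝ) :
    ∑ k, F k * μ.real ((fun x => g (X x)) ⁻¹' {k}) = ∑ i, F (g i) * μ.real (X ⁻¹' {i}) := by
  classical
  have h : ∀ k, μ.real ((fun x => g (X x)) ⁻¹' {k})
      = ∑ i with g i = k, μ.real (X ⁻¹' {i}) := by
    intro k
    rw [← measureReal_biUnion_finset]
    · congr 1; ext; simp
    · intro i _ j _ hij
      exact Disjoint.preimage X (by simpa using hij)
    · intro i _; exact hX i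
  simp_rw [h, Finset.mul_sum]
  rw [← Finset.sum_fiberwise (s := Finset.univ) (g := g)]
  refine Finset.sum_congr rfl fun k _ => Finset.sum_congr rfl fun i hi => ?_
  simp only [Finset.mem_filter] at hi
  rw [hi.2]

lemma ent_nonneg (X : Ω → ι) : 0 ≤ ent μ X :=
  Finset.sum_nonneg fun _ _ => Real.negMulLog_nonneg measureReal_nonneg measureReal_le_one

lemma ent_comp_eq {X : Ω → ι} (hX : FinMeas X) (g : ι → κ) :
    ent μ (fun x => g (X x))
      = ∑ i, - Real.log (μ.real ((fun x => g (X x)) ⁻¹' {g i})) * μ.real (X ⁻¹' {i}) := by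
  rw [← sum_real_fibers_comp (μ := μ) hX g
    (fun k => - Real.log (μ.real ((fun x => g (X x)) ⁻¹' {k})))]
  exact Finset.sum_congr rfl fun k _ => by rw [Real.negMulLog]; ring

lemma real_fiber_le (X : Ω → ι) (g : ι → κ) (i : ι) :
    μ.real (X ⁻¹' {i}) ≤ μ.real ((fun x => g (X x)) ⁻¹' {g i}) :=
  measureReal_mono (fun x hx => by simp at hx; simp [hx])

lemma ent_comp_le {X : Ω → ι} (hX : FinMeas X) (g : ι → κ) :
    ent μ (fun x => g (X x)) ≤ ent μ X := by
  rw [ent_comp_eq hX g, ent]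
  refine Finset.sum_le_sum fun i _ => ?_
  have h0 : 0 ≤ μ.real (X ⁻¹' {i}) := measureReal_nonneg
  rcases h0.eq_or_lt with h | h
  · rw [← h]; simp
  · have := Real.log_le_log h (real_fiber_le (μ := μ) X g i)
    rw [Real.negMulLog]
    nlinarith

lemma ent_comp_injective {X : Ω → ι} (hX : FinMeas X) {g : ι → κ} (hg : g.Injective) :
    ent μ (fun x => g (X x)) = ent μ X := by
  rw [ent_comp_eq hX g, ent]
  refine Finset.sum_congr rfl fun i _ => ?_
  have : (fun x => g (X x)) ⁻¹' {g i} = X ⁻¹' {i} := by ext; simp [hg.eq_iff]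
  rw [this, Real.negMulLog]; ring

/-- Strong subadditivity `H(X,Y,Z) + H(Z) ≤ H(X,Z) + H(Y,Z)`, obtained by summing
`log t ≤ t - 1` over the atoms with `t = p(x,z) p(y,z) / (p(z) p(x,y,z))`. -/
lemma ent_strong_subadd {X : Ω → ι} {Y : Ω → κ} {Z : Ω → τ} (hX : FinMeas X) (hY : FinMeas Y)
    (hZ : FinMeas Z) :
    ent μ (fun x => ((X x, Y x), Z x)) + ent μ Z
      ≤ ent μ (fun x => (X x, Z x)) + ent μ (fun x => (Y x, Z x)) := by
  set W : Ω → (ι × κ) × τ := fun x => ((X x, Y x), Z x) with hW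
  have hWm : FinMeas W := (hX.prodMk hY).prodMk hZ
  have e1 := ent_comp_eq (μ := μ) hWm (fun w => w.2)
  have e2 := ent_comp_eq (μ := μ) hWm (fun w => (w.1.1, w.2))
  have e3 := ent_comp_eq (μ := μ) hWm (fun w => (w.1.2, w.2))
  simp only [hW] at e1 e2 e3
  rw [e1, e2, e3, ← hW, ent, ← sub_nonpos]
  set p := fun w : (ι × κ) × τ => μ.real (W ⁻¹' {w})
  set pz := fun z => μ.real ((fun x => Z x) ⁻¹' {z})
  set px := fun z => μ.real ((fun x => (X x, Z x)) ⁻¹' {z})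
  set py := fun z => μ.real ((fun x => (Y x, Z x)) ⁻¹' {z})
  have key : ∀ w : (ι × κ) × τ, Real.negMulLog (p w) + -Real.log (pz w.2) * p w
      - (-Real.log (px (w.1.1, w.2)) * p w + -Real.log (py (w.1.2, w.2)) * p w)
      ≤ px (w.1.1, w.2) * py (w.1.2, w.2) / pz w.2 - p w := by
    intro w
    have h0 : 0 ≤ p w := measureReal_nonneg
    rcases h0.eq_or_lt with h | h
    · rw [← h]; simp
      have : 0 ≤ px (w.1.1, w.2) := measureReal_nonneg
      have : 0 ≤ py (w.1.2, w.2) := measureReal_nonneg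
      have : 0 ≤ pz w.2 := measureReal_nonneg
      positivity
    · have hx : 0 < px (w.1.1, w.2) :=
        h.trans_le (real_fiber_le (μ := μ) W (fun w => (w.1.1, w.2)) w)
      have hy : 0 < py (w.1.2, w.2) :=
        h.trans_le (real_fiber_le (μ := μ) W (fun w => (w.1.2, w.2)) w)
      have hz : 0 < pz w.2 := h.trans_le (real_fiber_le (μ := μ) W (fun w => w.2) w)
      have hl := Real.log_le_sub_one_of_pos (x := px (w.1.1, w.2) * py (w.1.2, w.2) / pz w.2 / p w)
        (by positivity)
      rw [Real.log_div (by positivity) (by positivity), Real.log_div (by positivity)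
        (by positivity), Real.log_mul (by positivity) (by positivity)] at hl
      have := mul_le_mul_of_nonneg_right hl h0
      rw [sub_mul (_ / _), div_mul_cancel₀ _ h.ne'] at this
      rw [Real.negMulLog]
      linarith
  have hsum := Finset.sum_le_sum fun w (_ : w ∈ Finset.univ) => key w
  simp only [Finset.sum_add_distrib, Finset.sum_sub_distrib] at hsum
  refine hsum.trans ?_
  have h1 : ∑ w, p w = 1 := sum_real_fibers hWm
  have hmx : ∀ z, ∑ i, px (i, z) = pz z := by
    intro z
    classical
    have := sum_real_fibers_comp (μ := μ) (hX.prodMk hZ) (fun w => w.2)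
      (fun t => if t = z then 1 else 0)
    simp [Fintype.sum_prod_type] at this
    exact this.symm
  have hmy : ∀ z, ∑ i, py (i, z) = pz z := by
    intro z
    classical
    have := sum_real_fibers_comp (μ := μ) (hY.prodMk hZ) (fun w => w.2)
      (fun t => if t = z then 1 else 0)
    simp [Fintype.sum_prod_type] at this
    exact this.symm
  have h2 : ∑ w : (ι × κ) × τ, px (w.1.1, w.2) * py (w.1.2, w.2) / pz w.2 = 1 := by
    rw [Fintype.sum_prod_type_right]
    simp only [Fintype.sum_prod_type, ← Finset.sum_div, ← Finset.mul_sum, ← Finset.sum_mul, hmx,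
      hmy, mul_self_div_self]
    exact sum_real_fibers hZ
  rw [h1, h2]; simp

lemma cent_pair_le {X : Ω → ι} {Y : Ω → κ} {Z : Ω → τ} (hX : FinMeas X) (hY : FinMeas Y)
    (hZ : FinMeas Z) :
    cent μ (fun x => (X x, Y x)) Z ≤ cent μ X Z + cent μ Y Z := by
  have := ent_strong_subadd (μ := μ) hX hY hZ
  simp only [cent]; linarith

lemma cent_comp_left_le {X : Ω → ι} {Z : Ω → τ} (hX : FinMeas X) (hZ : FinMeas Z) (g : ι → κ) :
    cent μ (fun x => g (X x)) Z ≤ cent μ X Z := by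
  have := ent_comp_le (μ := μ) (hX.prodMk hZ) (fun w => (g w.1, w.2))
  simp only [cent]; linarith

/-- Conditioning on less information increases conditional entropy. -/
lemma cent_comp_right_le {X : Ω → ι} {Y : Ω → κ} (hX : FinMeas X) (hY : FinMeas Y) (g : κ → τ) :
    cent μ X Y ≤ cent μ X (fun x => g (Y x)) := by
  have h1 := ent_strong_subadd (μ := μ) hX hY (hY.comp g)
  have h2 := ent_comp_injective (μ := μ) (hX.prodMk hY)
    (g := fun w => ((w.1, w.2), g w.2)) (by intro a b; simp +contextual [Prod.ext_iff])
  have h3 := ent_comp_injective (μ := μ) hY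
    (g := fun w => (w, g w)) (by intro a b; simp +contextual [Prod.ext_iff])
  simp only [cent]
  linarith

lemma cent_nonneg {X : Ω → ι} {Y : Ω → κ} (hX : FinMeas X) (hY : FinMeas Y) :
    0 ≤ cent μ X Y := by
  have := ent_comp_le (μ := μ) (hX.prodMk hY) (fun w => w.2)
  simp only [cent]; linarith

lemma cent_comp_self {Y : Ω → κ} (hY : FinMeas Y) (g : κ → τ) :
    cent μ (fun x => g (Y x)) Y = 0 := by
  have h3 := ent_comp_injective (μ := μ) hY
    (g := fun w => (g w, w)) (by intro a b; simp +contextual [Prod.ext_iff])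
  simp only [cent]
  linarith

lemma ent_const [Unique τ] : ent μ (fun _ : Ω => (default : τ)) = 0 := by
  simp [ent]

lemma ent_pair_le {X : Ω → ι} {Y : Ω → κ} (hX : FinMeas X) (hY : FinMeas Y) :
    ent μ (fun x => (X x, Y x)) ≤ ent μ X + ent μ Y := by
  have hU : FinMeas (fun _ : Ω => ()) := fun _ => by simp
  have h1 := ent_strong_subadd (μ := μ) hX hY hU
  have h2 := ent_comp_injective (μ := μ) (hX.prodMk hY)
    (g := fun w => (w, ())) (by intro a b; simp +contextual [Prod.ext_iff])
  have h3 := ent_comp_injective (μ := μ) hX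
    (g := fun w => (w, ())) (by intro a b; simp +contextual [Prod.ext_iff])
  have h4 := ent_comp_injective (μ := μ) hY
    (g := fun w => (w, ())) (by intro a b; simp +contextual [Prod.ext_iff])
  have h5 : ent μ (fun _ : Ω => ()) = 0 := ent_const
  linarith

end Labels

/-! ### Entropy rates -/

section Dynamics

variable {Ω ι κ τ : Type*} [MeasurableSpace Ω]

/-- The `n`-step itinerary of a point through the partition labelled by `X`; its fibres are the
atoms of the dynamical refinement. -/
def itin (f : Ω → Ω) (X : Ω → ι) (n : ℕ) (x : Ω) : Fin n → ι := fun j => X (f^[j] x)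

/-- Entropy rate `h_μ(f, X) = inf_n H(X^n) / n` of the partition labelled by `X`. -/
noncomputable def hrate [Fintype ι] (f : Ω → Ω) (μ : Measure Ω) (X : Ω → ι) : ℝ :=
  ⨅ n : ℕ, ent μ (itin f X (n + 1)) / (n + 1)

variable {f : Ω → Ω}

lemma FinMeas.itin {X : Ω → ι} (hX : FinMeas X) (hf : Measurable f) (n : ℕ) :
    FinMeas (itin f X n) :=
  FinMeas.pi fun j => hX.comp_measurable (hf.iterate j)

variable [Fintype ι] [Fintype κ] [Fintype τ] {μ : Measure Ω} [IsProbabilityMeasure μ]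

lemma ent_comp_iterate (hf : Measurable f) (hinv : InvMeasure f μ) {X : Ω → ι} (hX : FinMeas X)
    (k : ℕ) : ent μ (fun x => X (f^[k] x)) = ent μ X := by
  have hmp : MeasurePreserving f μ μ :=
    ⟨hf, Measure.ext fun s hs => by rw [Measure.map_apply hf hs, hinv s hs]⟩
  refine Finset.sum_congr rfl fun i _ => ?_
  have : (fun x => X (f^[k] x)) ⁻¹' {i} = f^[k] ⁻¹' (X ⁻¹' {i}) := rfl
  rw [this, (hmp.iterate k).measureReal_preimage (hX i).nullMeasurableSet]

lemma cent_comp_iterate (hf : Measurable f) (hinv : InvMeasure f μ) {X : Ω → ι} {Y : Ω → κ}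
    (hX : FinMeas X) (hY : FinMeas Y) (k : ℕ) :
    cent μ (fun x => X (f^[k] x)) (fun x => Y (f^[k] x)) = cent μ X Y := by
  rw [cent, ent_comp_iterate hf hinv hY, cent,
    ← ent_comp_iterate hf hinv (hX.prodMk hY) k]

/-- The itinerary of length `m + n` read off from its first `m` and last `n` entries. -/
lemma itin_add (X : Ω → ι) (m n : ℕ) :
    itin f X (m + n)
      = fun x => (fun w : (Fin m → ι) × (Fin n → ι) => Fin.append w.1 w.2)
          (itin f X m x, itin f X n (f^[m] x)) := by
  funext x j
  refine Fin.addCases (fun i => ?_) (fun i => ?_) j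
  · simp [itin]
  · simp [itin, ← Function.iterate_add_apply, Nat.add_comm]

lemma ent_itin_subadditive (hf : Measurable f) (hinv : InvMeasure f μ) {X : Ω → ι}
    (hX : FinMeas X) : Subadditive (fun n => ent μ (itin f X n)) := by
  intro m n
  have h1 := hX.itin hf m
  have h2 := hX.itin hf n
  have h3 := h2.comp_measurable (hf.iterate m)
  simp only [itin_add X m n]
  refine (ent_comp_le (μ := μ) (h1.prodMk h3)
    (fun w : (Fin m → ι) × (Fin n → ι) => Fin.append w.1 w.2)).trans ?_
  refine (ent_pair_le h1 h3).trans ?_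
  rw [ent_comp_iterate hf hinv h2]

lemma hrate_bddBelow (X : Ω → ι) :
    BddBelow (range fun n : ℕ => ent μ (itin f X (n + 1)) / (n + 1)) := by
  refine ⟨0, ?_⟩
  rintro _ ⟨n, rfl⟩
  have := ent_nonneg (μ := μ) (itin f X (n + 1))
  simp only; positivity

lemma hrate_nonneg (X : Ω → ι) : 0 ≤ hrate f μ X := by
  refine le_ciInf fun n => ?_
  have := ent_nonneg (μ := μ) (itin f X (n + 1))
  positivity

lemma hrate_le (X : Ω → ι) (n : ℕ) (hn : n ≠ 0) : hrate f μ X ≤ ent μ (itin f X n) / n := by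
  obtain ⟨k, rfl⟩ := Nat.exists_eq_succ_of_ne_zero hn
  have := ciInf_le (hrate_bddBelow (f := f) (μ := μ) X) k
  simpa [hrate] using this

/-- By Fekete's lemma the infimum defining the entropy rate is a limit. -/
lemma tendsto_hrate (hf : Measurable f) (hinv : InvMeasure f μ) {X : Ω → ι} (hX : FinMeas X) :
    Tendsto (fun n : ℕ => ent μ (itin f X (n + 1)) / (n + 1)) atTop (𝓝 (hrate f μ X)) := by
  have hs := ent_itin_subadditive hf hinv hX
  have hb : BddBelow (range fun n : ℕ => ent μ (itin f X n) / n) := by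
    refine ⟨0, ?_⟩
    rintro _ ⟨n, rfl⟩
    have := ent_nonneg (μ := μ) (itin f X n)
    simp only; positivity
  have ht := hs.tendsto_lim hb
  have ht' := (tendsto_add_atTop_iff_nat 1).2 ht
  have hl : hs.lim = hrate f μ X := by
    refine le_antisymm (le_ciInf fun n => ?_) (ge_of_tendsto ht ?_)
    · have := hs.lim_le_div hb (n := n + 1) (by simp)
      simpa using this
    · filter_upwards [eventually_ne_atTop 0] with n hn using hrate_le X n hn
  rw [← hl]
  simpa using ht'

lemma ent_itin_one {X : Ω → ι} (hX : FinMeas X) : ent μ (itin f X 1) = ent μ X := by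
  have h : itin f X 1 = fun x => (fun i (_ : Fin 1) => i) (X x) := by
    funext x j
    simp [itin, Subsingleton.elim j 0]
  rw [h]
  exact ent_comp_injective (g := fun (i : ι) (_ : Fin 1) => i) hX (fun a b h => congrFun h 0)

lemma ent_itin_le (hf : Measurable f) (hinv : InvMeasure f μ) {X : Ω → ι} (hX : FinMeas X)
    (n : ℕ) : ent μ (itin f X n) ≤ n * ent μ X := by
  have hs := ent_itin_subadditive hf hinv hX
  have h0 : ent μ (itin f X 0) ≤ 0 := by
    have : itin f X 0 = fun _ => default := by funext x; exact Subsingleton.elim _ _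
    rw [this, ent_const]
  have h1 := ent_itin_one (μ := μ) (f := f) hX
  set u : ℕ → ℝ := fun n => ent μ (itin f X n) with hu
  change u 0 ≤ 0 at h0
  change u 1 = _ at h1
  change u n ≤ _
  have := hs.apply_mul_add_le n 1 0
  rw [mul_one, add_zero, h1] at this
  linarith

lemma negMulLog_le_one {x : ℝ} (hx : 0 ≤ x) : Real.negMulLog x ≤ 1 := by
  rcases hx.eq_or_lt with h | h
  · rw [← h]; simp
  · have := Real.one_sub_inv_le_log_of_pos h
    have h2 := mul_le_mul_of_nonneg_left this hx
    rw [mul_sub, mul_inv_cancel₀ h.ne'] at h2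
    rw [Real.negMulLog]; linarith

lemma ent_le_card (X : Ω → ι) : ent μ X ≤ Fintype.card ι := by
  refine (Finset.sum_le_sum fun i _ => negMulLog_le_one measureReal_nonneg).trans ?_
  simp

lemma itin_succ (X : Ω → ι) (n : ℕ) :
    itin f X (n + 1) = fun x => (fun w : (Fin n → ι) × ι => (Fin.snoc w.1 w.2 : Fin (n + 1) → ι))
      (itin f X n x, X (f^[n] x)) := by
  funext x j
  refine Fin.lastCases ?_ (fun i => ?_) j
  · simp [itin]
  · simp [itin]

lemma cent_itin_le (hf : Measurable f) (hinv : InvMeasure f μ) {X : Ω → ι} {Y : Ω → κ}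
    (hX : FinMeas X) (hY : FinMeas Y) (N : ℕ) :
    ∀ n ≤ N, cent μ (itin f X n) (itin f Y N) ≤ n * cent μ X Y := by
  intro n
  induction n with
  | zero =>
    intro _
    have : itin f X 0 = fun x => (fun _ => default) (itin f Y N x) := by
      funext x; exact Subsingleton.elim _ _
    rw [this, cent_comp_self (hY.itin hf N) (fun _ => (default : Fin 0 → ι))]
    simp
  | succ n ih =>
    intro hn
    have h1 := ih (by omega)
    have hXn := hX.comp_measurable (hf.iterate n)
    rw [itin_succ]
    refine (cent_comp_left_le (μ := μ) ((hX.itin hf n).prodMk hXn) (hY.itin hf N)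
      (fun w : (Fin n → ι) × ι => (Fin.snoc w.1 w.2 : Fin (n + 1) → ι))).trans ?_
    refine (cent_pair_le (hX.itin hf n) hXn (hY.itin hf N)).trans ?_
    have h2 := cent_comp_right_le (μ := μ) hXn (hY.itin hf N) (fun c => c ⟨n, hn⟩)
    have h3 := cent_comp_iterate hf hinv hX hY n
    simp only [itin] at h2 
    push_cast
    have : cent μ (fun x => X (f^[n] x)) (itin f Y N) ≤ cent μ X Y := h2.trans h3.le
    linarith

/-- The entropy rate is continuous in the partition:
`h(f, X) ≤ h(f, Y) + H(X | Y)`. -/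
lemma hrate_le_add_cent (hf : Measurable f) (hinv : InvMeasure f μ) {X : Ω → ι} {Y : Ω → κ}
    (hX : FinMeas X) (hY : FinMeas Y) : hrate f μ X ≤ hrate f μ Y + cent μ X Y := by
  rw [← sub_le_iff_le_add]
  refine le_ciInf fun n => ?_
  rw [sub_le_iff_le_add]
  refine (hrate_le X (n + 1) (by simp)).trans ?_
  have h1 := cent_itin_le hf hinv hX hY (n + 1) (n + 1) le_rfl
  have h2 := ent_comp_le (μ := μ) ((hX.itin hf (n + 1)).prodMk (hY.itin hf (n + 1))) (fun w => w.1)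
  simp only [cent] at h1 ⊢
  push_cast at h1 ⊢
  have h3 : ent μ (itin f X (n + 1)) ≤ _ := h2
  rw [div_add' _ _ _ (by positivity)]
  gcongr
  linarith

lemma hrate_comp_le (hf : Measurable f) (hinv : InvMeasure f μ) {Y : Ω → κ} (hY : FinMeas Y)
    (g : κ → ι) : hrate f μ (fun x => g (Y x)) ≤ hrate f μ Y := by
  have := hrate_le_add_cent hf hinv (hY.comp g) hY
  rwa [cent_comp_self hY, add_zero] at this

/-- Conditioning on an invariant finite partition `β` does not change the entropy rate: since
`H(X^n) ≤ H(β) + H(X^n | β)` and `n ↦ H(X^n | β)` is subadditive, `h(f, X) ≤ H(X^m | β) / m`. -/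
lemma hrate_le_cent_div (hf : Measurable f) (hinv : InvMeasure f μ) {X : Ω → ι} {β : Ω → κ}
    (hX : FinMeas X) (hβ : FinMeas β) (hβf : ∀ x, β (f x) = β x) (m : ℕ) :
    hrate f μ X ≤ cent μ (itin f X (m + 1)) β / (m + 1) := by
  have hβi : ∀ k x, β (f^[k] x) = β x := by
    intro k
    induction k with
    | zero => simp
    | succ k ih => intro x; rw [Function.iterate_succ_apply', hβf, ih]
  have hs : Subadditive (fun n => cent μ (itin f X n) β) := by
    intro m n
    have h1 := hX.itin hf m
    have h2 := hX.itin hf n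
    have h3 := h2.comp_measurable (hf.iterate m)
    simp only [itin_add X m n]
    refine (cent_comp_left_le (μ := μ) (h1.prodMk h3) hβ
      (fun w : (Fin m → ι) × (Fin n → ι) => Fin.append w.1 w.2)).trans ?_
    refine (cent_pair_le h1 h3 hβ).trans ?_
    have := cent_comp_iterate hf hinv h2 hβ m
    simp only [hβi] at this
    exact (congrArg _ this).le
  have hb : BddBelow (range fun n : ℕ => cent μ (itin f X n) β / n) := by
    refine ⟨0, ?_⟩
    rintro _ ⟨n, rfl⟩
    have := cent_nonneg (μ := μ) (hX.itin hf n) hβ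
    simp only; positivity
  have ht := hs.tendsto_lim hb
  have ht' : Tendsto (fun n : ℕ => cent μ (itin f X n) β / n + ent μ β / n) atTop
      (𝓝 (hs.lim + 0)) := ht.add (tendsto_const_div_atTop_nhds_zero_nat _)
  have hle : hrate f μ X ≤ hs.lim + 0 := by
    refine ge_of_tendsto ht' ?_
    filter_upwards [eventually_ne_atTop 0] with n hn
    refine (hrate_le X n hn).trans ?_
    have h2 := ent_comp_le (μ := μ) ((hX.itin hf n).prodMk hβ) (fun w => w.1)
    rw [← add_div]
    gcongr
    simp only [cent]
    have h3 : ent μ (itin f X n) ≤ _ := h2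
    linarith
  have := hs.lim_le_div hb (n := m + 1) (by simp)
  push_cast at this
  linarith

end Dynamics

section Partitions

variable {Ω ι : Type*} [MeasurableSpace Ω] {f : Ω → Ω}

lemma exists_label {P : Finset (Set Ω)} (hP : IsMeasPartition P) :
    ∃ X : Ω → {A // A ∈ P}, ∀ x A, X x = A ↔ x ∈ A.1 := by
  obtain ⟨_, hU, hD⟩ := hP
  have : ∀ x : Ω, ∃ A : {A // A ∈ P}, x ∈ A.1 := by
    intro x
    have : x ∈ ⋃₀ (P : Set (Set Ω)) := by rw [hU]; trivial
    obtain ⟨A, hA, hx⟩ := this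
    exact ⟨⟨A, hA⟩, hx⟩
  choose X hX using this
  refine ⟨X, fun x A => ⟨fun h => h ▸ hX x, fun h => ?_⟩⟩
  by_contra hne
  have := hD _ (X x).2 _ A.2 (fun h => hne (Subtype.ext h))
  exact (Set.ext_iff.1 this x).1 ⟨hX x, h⟩

lemma partInfo_dynRefine {P : Finset (Set Ω)} {X : Ω → {A // A ∈ P}}
    (hX : ∀ x A, X x = A ↔ x ∈ A.1) (μ : Measure Ω) (n : ℕ) :
    partInfo μ (dynRefine f P n) = ent μ (itin f X n) := by
  classical
  have hfib : ∀ c : Fin n → {A // A ∈ P},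
      itin f X n ⁻¹' {c} = ⋂ j : Fin n, f^[(j : ℕ)] ⁻¹' (c j).val := by
    intro c
    ext x
    simp [itin, funext_iff, hX]
  rw [partInfo, dynRefine, Finset.sum_image_of_pairwise_eq_zero]
  · simp only [ent, hfib]; rfl
  · intro c _ d _ hcd h
    rw [← hfib, ← hfib] at h
    -- distinct itineraries with the same fibre: the fibre is empty
    have he : itin f X n ⁻¹' {c} = ∅ := by
      ext x
      simp only [mem_preimage, mem_singleton_iff, mem_empty_iff_false, iff_false]
      intro hx
      have : x ∈ itin f X n ⁻¹' {d} := h ▸ hx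
      exact hcd (hx.symm.trans this)
    rw [← hfib, he]; simp

lemma finMeas_label {P : Finset (Set Ω)} (hP : IsMeasPartition P) {X : Ω → {A // A ∈ P}}
    (hX : ∀ x A, X x = A ↔ x ∈ A.1) : FinMeas X := by
  intro A
  have : X ⁻¹' {A} = A.1 := by ext x; simp [hX]
  rw [this]; exact hP.1 _ A.2

/-- The numbers whose supremum is `ksEntropy f μ`. -/
def rateSet (f : Ω → Ω) (μ : Measure Ω) : Set ℝ :=
  {h : ℝ | ∃ P : Finset (Set Ω), IsMeasPartition P ∧
    h = ⨅ n : ℕ, partInfo μ (dynRefine f P (n+1)) / (n+1)}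

lemma exists_label_of_mem_rateSet {μ : Measure Ω} {h : ℝ} (hh : h ∈ rateSet f μ) :
    ∃ (P : Finset (Set Ω)) (X : Ω → {A // A ∈ P}), FinMeas X ∧ h = hrate f μ X ∧
      ∀ ν, hrate f ν X ∈ rateSet f ν := by
  obtain ⟨P, hP, rfl⟩ := hh
  obtain ⟨X, hX⟩ := exists_label hP
  have : ∀ ν : Measure Ω, (⨅ n : ℕ, partInfo ν (dynRefine f P (n+1)) / (n+1)) = hrate f ν X := by
    intro ν
    simp only [partInfo_dynRefine hX, hrate]
  exact ⟨P, X, finMeas_label hP hX, this _, fun ν => ⟨P, hP, (this ν).symm⟩⟩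

lemma rateSet_nonempty (μ : Measure Ω) : (rateSet f μ).Nonempty :=
  ⟨_, {univ}, ⟨by simp, by simp, by simp⟩, rfl⟩

lemma exists_mem_rateSet_ge [Fintype ι] {X : Ω → ι} (hX : FinMeas X) (hf : Measurable f)
    {μ : Measure Ω} [IsProbabilityMeasure μ] (hinv : InvMeasure f μ) :
    ∃ h ∈ rateSet f μ, hrate f μ X ≤ h := by
  classical
  set P : Finset (Set Ω) := Finset.univ.image (fun i => X ⁻¹' {i}) with hPdef
  have hP : IsMeasPartition P := by
    refine ⟨?_, ?_, ?_⟩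
    · simp only [hPdef, Finset.mem_image, Finset.mem_univ, true_and]
      rintro _ ⟨i, rfl⟩; exact hX i
    · ext x; simp [hPdef]
    · simp only [hPdef, Finset.mem_image, Finset.mem_univ, true_and]
      rintro _ ⟨i, rfl⟩ _ ⟨j, rfl⟩ hne
      ext x
      simp only [mem_inter_iff, mem_preimage, mem_singleton_iff, mem_empty_iff_false, iff_false]
      rintro ⟨rfl, h2⟩
      exact hne (by rw [h2])
  obtain ⟨Y, hY⟩ := exists_label hP
  refine ⟨hrate f μ Y, ⟨P, hP, ?_⟩, ?_⟩
  · simp only [partInfo_dynRefine hY, hrate]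
  · have : Nonempty Ω := nonempty_of_isProbabilityMeasure μ
    -- `X x` is recovered from the atom containing `x` by evaluating `X` at any point of it
    let g : {A // A ∈ P} → ι := fun A => X (Classical.epsilon fun y => y ∈ A.1)
    have hXY : X = fun x => g (Y x) := by
      funext x
      have hx : x ∈ (Y x).1 := (hY x _).1 rfl
      have he : (Classical.epsilon fun y => y ∈ (Y x).1) ∈ (Y x).1 :=
        Classical.epsilon_spec (p := fun y => y ∈ (Y x).1) ⟨x, hx⟩
      obtain ⟨i, -, hi⟩ := Finset.mem_image.1 (Y x).2
      rw [← hi] at hx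
      have he' : (Classical.epsilon fun y => y ∈ (Y x).1) ∈ X ⁻¹' {i} := by rw [hi]; exact he
      exact (show X x = i from hx).trans (show X _ = i from he').symm
    calc hrate f μ X = hrate f μ (fun x => g (Y x)) := by rw [← hXY]
      _ ≤ _ := hrate_comp_le hf hinv (finMeas_label hP hY) g

end Partitions

/-! ### Generating partitions -/

section Generating

variable {Ω ι κ τ : Type*} [MeasurableSpace Ω]

/-- A Fano-type estimate: if `X` and `Y` differ on a set of small measure then `H(X | Y)` is small,
uniformly in `X` and `Y`. -/
lemma exists_delta_cent_le (ι : Type*) [Fintype ι] {ε : ℝ} (hε : 0 < ε) :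
    ∃ δ > 0, ∀ (μ : Measure Ω) [IsProbabilityMeasure μ] (X Y : Ω → ι), FinMeas X → FinMeas Y →
      μ.real {x | X x ≠ Y x} < δ → cent μ X Y ≤ ε := by
  classical
  have huc : UniformContinuousOn Real.negMulLog (Icc 0 1) :=
    isCompact_Icc.uniformContinuousOn_of_continuous Real.continuous_negMulLog.continuousOn
  set ε' : ℝ := ε / ((Fintype.card (ι × ι) : ℝ) + 1) with hε'
  have hε'pos : 0 < ε' := by positivity
  obtain ⟨δ, hδ, H⟩ := Metric.uniformContinuousOn_iff.1 huc ε' hε'pos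
  refine ⟨δ, hδ, fun μ _ X Y hX hY hμ => ?_⟩
  have hterm : ∀ w : ι × ι, Real.negMulLog (μ.real ((fun x => (X x, Y x)) ⁻¹' {w}))
      - (if w.1 = w.2 then Real.negMulLog (μ.real (Y ⁻¹' {w.2})) else 0) ≤ ε' := by
    rintro ⟨i, j⟩
    have hI : ∀ s : Set Ω, μ.real s ∈ Icc (0:ℝ) 1 :=
      fun s => ⟨measureReal_nonneg, measureReal_le_one⟩
    by_cases hij : i = j
    · subst hij
      simp only [if_true]
      have hsub : (fun x => (X x, Y x)) ⁻¹' {(i, i)} ⊆ Y ⁻¹' {i} := by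
        intro x hx; simp at hx; simp [hx.2]
      have hd := measureReal_sdiff (μ := μ) hsub (hX.prodMk hY (i, i))
      have hle : μ.real (Y ⁻¹' {i} \ (fun x => (X x, Y x)) ⁻¹' {(i, i)})
          ≤ μ.real {x | X x ≠ Y x} := by
        refine measureReal_mono fun x hx => ?_
        simp only [Set.mem_sdiff, mem_preimage, mem_singleton_iff, Prod.mk.injEq, not_and] at hx
        intro h
        exact hx.2 (h.trans hx.1) hx.1
      have h0 : 0 ≤ μ.real (Y ⁻¹' {i} \ (fun x => (X x, Y x)) ⁻¹' {(i, i)}) := measureReal_nonneg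
      have := H _ (hI ((fun x => (X x, Y x)) ⁻¹' {(i, i)})) _ (hI (Y ⁻¹' {i}))
        (by rw [Real.dist_eq, abs_sub_lt_iff]; constructor <;> linarith)
      rw [Real.dist_eq] at this
      exact (le_abs_self _).trans this.le
    · simp only [hij, if_false]
      have hle : μ.real ((fun x => (X x, Y x)) ⁻¹' {(i, j)}) ≤ μ.real {x | X x ≠ Y x} := by
        refine measureReal_mono fun x hx => ?_
        simp only [mem_preimage, mem_singleton_iff, Prod.mk.injEq] at hx
        simp [hx.1, hx.2, hij]
      have := H _ (hI ((fun x => (X x, Y x)) ⁻¹' {(i, j)})) 0 (by simp)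
        (by rw [Real.dist_eq, sub_zero, abs_of_nonneg measureReal_nonneg]; linarith)
      rw [Real.dist_eq, Real.negMulLog_zero] at this
      exact (le_abs_self _).trans this.le
  have hsum := Finset.sum_le_sum fun w (_ : w ∈ Finset.univ) => hterm w
  rw [Finset.sum_sub_distrib, Finset.sum_const, Finset.card_univ, nsmul_eq_mul] at hsum
  have h2 : ∑ w : ι × ι, (if w.1 = w.2 then Real.negMulLog (μ.real (Y ⁻¹' {w.2})) else 0)
      = ent μ Y := by
    rw [Fintype.sum_prod_type_right]
    simp [ent]
  rw [h2] at hsum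
  refine hsum.trans ?_
  rw [hε', mul_div_assoc']
  rw [div_le_iff₀ (by positivity)]
  nlinarith

variable [MeasurableSpace.CountablyGenerated Ω]

open scoped Classical in
/-- The partition generated by the first `k` sets of a countable generating family. -/
noncomputable def genPart (k : ℕ) (x : Ω) : Fin k → Bool :=
  fun j => decide (x ∈ MeasurableSpace.natGeneratingSequence Ω j)

lemma finMeas_genPart (k : ℕ) : FinMeas (genPart (Ω := Ω) k) := by
  refine FinMeas.pi fun j => ?_
  intro b
  have hm := MeasurableSpace.measurableSet_natGeneratingSequence (α := Ω) j
  cases b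
  · convert hm.compl using 1; ext; simp [genPart]
  · convert hm using 1; ext; simp [genPart]

lemma genPart_restrict {k l : ℕ} (h : k ≤ l) :
    genPart (Ω := Ω) k = fun x => (fun c : Fin l → Bool => fun j => c (Fin.castLE h j))
      (genPart l x) := by
  funext x j; simp [genPart]

/-- Sets that are unions of atoms of some `genPart k`. -/
def genAlg (Ω : Type*) [MeasurableSpace Ω] [MeasurableSpace.CountablyGenerated Ω] : Set (Set Ω) :=
  {s | ∃ k, ∃ T : Set (Fin k → Bool), s = genPart k ⁻¹' T}

lemma genAlg_lift {s : Set Ω} {k l : ℕ} (h : k ≤ l) {T : Set (Fin k → Bool)}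
    (hs : s = genPart k ⁻¹' T) : ∃ T' : Set (Fin l → Bool), s = genPart l ⁻¹' T' := by
  refine ⟨(fun c : Fin l → Bool => fun j => c (Fin.castLE h j)) ⁻¹' T, ?_⟩
  rw [hs, genPart_restrict h]; rfl

lemma isSetAlgebra_genAlg : IsSetAlgebra (genAlg Ω) where
  empty_mem := ⟨0, ∅, by simp⟩
  compl_mem := by
    rintro s ⟨k, T, rfl⟩
    exact ⟨k, Tᶜ, by simp⟩
  union_mem := by
    rintro s t ⟨k, T, hs⟩ ⟨l, T', ht⟩
    obtain ⟨A, hA⟩ := genAlg_lift (le_max_left k l) hs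
    obtain ⟨B, hB⟩ := genAlg_lift (le_max_right k l) ht
    exact ⟨max k l, A ∪ B, by rw [hA, hB]; simp⟩

lemma measurableSet_genAlg {s : Set Ω} (hs : s ∈ genAlg Ω) : MeasurableSet s := by
  obtain ⟨k, T, rfl⟩ := hs
  exact (finMeas_genPart k).preimage T

lemma countable_genAlg : (genAlg Ω).Countable := by
  have : genAlg Ω = ⋃ k, range (fun T : Set (Fin k → Bool) => genPart k ⁻¹' T) := by
    ext s; simp [genAlg, eq_comm]
  rw [this]
  exact countable_iUnion fun k => countable_range _

lemma generateFrom_genAlg : ‹MeasurableSpace Ω› = MeasurableSpace.generateFrom (genAlg Ω) := by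
  refine le_antisymm ?_ (MeasurableSpace.generateFrom_le fun s hs => measurableSet_genAlg hs)
  conv_lhs => rw [← MeasurableSpace.generateFrom_natGeneratingSequence Ω]
  refine MeasurableSpace.generateFrom_mono ?_
  rintro _ ⟨n, rfl⟩
  refine ⟨n + 1, {c | c (Fin.last n) = true}, ?_⟩
  ext x; simp [genPart]

/-- Every finite partition is approximated in measure by partitions coarser than some `genPart k`. -/
lemma exists_genPart_approx [Fintype ι] (μ : Measure Ω) [IsProbabilityMeasure μ] {X : Ω → ι}
    (hX : FinMeas X) {δ : ℝ} (hδ : 0 < δ) :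
    ∃ k, ∃ g : (Fin k → Bool) → ι, μ.real {x | X x ≠ g (genPart k x)} < δ := by
  classical
  have : Nonempty Ω := nonempty_of_isProbabilityMeasure μ
  have hdense := Measure.MeasureDense.of_generateFrom_isSetAlgebra_finite (μ := μ)
    (isSetAlgebra_genAlg (Ω := Ω)) generateFrom_genAlg
  set δ' := δ / ((Fintype.card ι : ℝ) + 1)
  have hδ' : 0 < δ' := by positivity
  have h1 : ∀ i, ∃ k, ∃ T : Set (Fin k → Bool),
      μ.real (symmDiff (X ⁻¹' {i}) (genPart k ⁻¹' T)) < δ' := by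
    intro i
    obtain ⟨t, ⟨k, T, rfl⟩, ht⟩ := hdense.approx (X ⁻¹' {i}) (hX i) (measure_ne_top _ _) δ' hδ'
    refine ⟨k, T, ?_⟩
    rw [measureReal_def]
    exact (ENNReal.lt_ofReal_iff_toReal_lt (measure_ne_top _ _)).1 ht
  choose k T hT using h1
  set K := Finset.univ.sup k
  have h2 : ∀ i, ∃ T' : Set (Fin K → Bool), genPart (Ω := Ω) (k i) ⁻¹' (T i) = genPart K ⁻¹' T' :=
    fun i => genAlg_lift (Finset.le_sup (Finset.mem_univ i)) rfl
  choose T' hT' using h2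
  obtain ⟨x0⟩ := this
  refine ⟨K, fun c => if h : ∃ i, c ∈ T' i then h.choose else X x0, ?_⟩
  have hsub : {x | X x ≠ (if h : ∃ i, genPart K x ∈ T' i then h.choose else X x0)} ⊆
      ⋃ i, symmDiff (X ⁻¹' {i}) (genPart (k i) ⁻¹' (T i)) := by
    intro x hx
    by_contra hcon
    simp only [mem_iUnion, not_exists, hT'] at hcon
    have hiff : ∀ i, X x = i ↔ genPart K x ∈ T' i := by
      intro i
      have := hcon i
      simp only [Set.mem_symmDiff, mem_preimage, mem_singleton_iff] at this
      tauto
    apply hx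
    have hex : ∃ i, genPart K x ∈ T' i := ⟨X x, (hiff _).1 rfl⟩
    rw [dif_pos hex]
    exact (hiff _).2 hex.choose_spec
  calc _ ≤ μ.real (⋃ i, symmDiff (X ⁻¹' {i}) (genPart (k i) ⁻¹' (T i))) := measureReal_mono hsub
    _ ≤ ∑ i, μ.real (symmDiff (X ⁻¹' {i}) (genPart (k i) ⁻¹' (T i))) :=
        measureReal_iUnion_fintype_le _
    _ ≤ ∑ i : ι, δ' := Finset.sum_le_sum fun i _ => (hT i).le
    _ < δ := by
        rw [Finset.sum_const, Finset.card_univ, nsmul_eq_mul, mul_div_assoc',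
          div_lt_iff₀ (by positivity)]
        nlinarith

/-- The rates of the countably many partitions `genPart k` control those of all partitions. -/
lemma exists_hrate_le_genPart [Fintype ι] {μ : Measure Ω} [IsProbabilityMeasure μ] {f : Ω → Ω}
    (hf : Measurable f) (hinv : InvMeasure f μ) {X : Ω → ι} (hX : FinMeas X) :
    ∃ k, hrate f μ X ≤ hrate f μ (genPart k) + 1 := by
  obtain ⟨δ, hδ, H⟩ := exists_delta_cent_le (Ω := Ω) ι one_pos
  obtain ⟨k, g, hg⟩ := exists_genPart_approx μ hX hδ
  refine ⟨k, ?_⟩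
  have h1 := hrate_le_add_cent hf hinv hX (finMeas_genPart (Ω := Ω) k)
  have h2 := cent_comp_right_le (μ := μ) hX (finMeas_genPart (Ω := Ω) k) g
  have h3 := H μ X (fun x => g (genPart k x)) hX ((finMeas_genPart k).comp g) hg
  linarith

lemma hrate_genPart_mono {μ : Measure Ω} [IsProbabilityMeasure μ] {f : Ω → Ω}
    (hf : Measurable f) (hinv : InvMeasure f μ) :
    Monotone (fun k => hrate f μ (genPart (Ω := Ω) k)) := by
  intro k l h
  simp only
  rw [genPart_restrict h]
  exact hrate_comp_le hf hinv (finMeas_genPart l) (fun c : Fin l → Bool => fun j => c (Fin.castLE h j))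

end Generating

/-! ### The mean ergodic theorem for visit frequencies -/

section MeanErgodic

variable {Ω : Type*} [MeasurableSpace Ω] {f : Ω → Ω} {μ : Measure Ω} [IsProbabilityMeasure μ]

lemma InvMeasure.measurePreserving (hf : Measurable f) (hinv : InvMeasure f μ) :
    MeasurePreserving f μ μ :=
  ⟨hf, Measure.ext fun s hs => by rw [Measure.map_apply hf hs, hinv s hs]⟩

/-- Birkhoff averages of the indicator of `A`, i.e. frequencies of visits to `A`. -/
noncomputable def freq (f : Ω → Ω) (A : Set Ω) (n : ℕ) (x : Ω) : ℝ :=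
  (n : ℝ)⁻¹ * ∑ j ∈ Finset.range n, A.indicator 1 (f^[j] x)

lemma measurable_freq (hf : Measurable f) {A : Set Ω} (hA : MeasurableSet A) (n : ℕ) :
    Measurable (freq f A n) := by
  refine Measurable.const_mul (Finset.measurable_fun_sum _ fun j _ => ?_) _
  exact (measurable_one.indicator hA).comp (hf.iterate j)

/-- An almost everywhere invariant function agrees almost everywhere with a function that is
measurable for the σ-algebra of strictly invariant sets, namely `x ↦ limsup h (f^n x)`. The real
`limsup` may be a junk value off a null set, but it is strictly invariant everywhere. -/
lemma exists_invariant_version (hf : MeasurePreserving f μ μ) {h : Ω → ℝ} (hh : Measurable h)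
    (hinv : h ∘ f =ᵐ[μ] h) :
    ∃ h' : Ω → ℝ, Measurable[MeasurableSpace.invariants f] h' ∧ h' =ᵐ[μ] h := by
  refine ⟨fun x => limsup (fun n => h (f^[n] x)) atTop, ?_, ?_⟩
  · refine MeasurableSpace.measurable_invariants_dom.2 ⟨?_, fun s _ => ?_⟩
    · exact Measurable.limsup fun n => hh.comp (hf.measurable.iterate n)
    · have : (fun x => limsup (fun n => h (f^[n] x)) atTop) ∘ f
          = fun x => limsup (fun n => h (f^[n] x)) atTop := by
        funext x
        exact limsup_nat_add (fun n => h (f^[n] x)) 1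
      rw [this]
  · have hn : ∀ n : ℕ, ∀ᵐ x ∂μ, h (f^[n] x) = h x := by
      intro n
      induction n with
      | zero => simp
      | succ n ih =>
        have h1 := hf.quasiMeasurePreserving.ae ih
        filter_upwards [h1, hinv] with x hx hx'
        rw [Function.iterate_succ_apply, hx]
        exact hx'
    filter_upwards [ae_all_iff.2 hn] with x hx
    simp [hx]

/-- Mean ergodic theorem for visit frequencies, with a limit measurable for the σ-algebra of
strictly invariant sets. -/
lemma exists_tendsto_freq (hf : MeasurePreserving f μ μ) {A : Set Ω} (hA : MeasurableSet A) :
    ∃ h : Ω → ℝ, Measurable[MeasurableSpace.invariants f] h ∧ Integrable h μ ∧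
      Tendsto (fun n => eLpNorm (fun x => freq f A n x - h x) 1 μ) atTop (𝓝 0) := by
  set U := (Lp.compMeasurePreservingₗᵢ (E := ℝ) (p := 2) ℝ f hf).toContinuousLinearMap with hU
  have hUn : ‖U‖ ≤ 1 := LinearIsometry.norm_toContinuousLinearMap_le _
  have hg : MemLp (A.indicator (1 : Ω → ℝ)) 2 μ := (memLp_const (1 : ℝ)).indicator hA
  have hlim := U.tendsto_birkhoffAverage_orthogonalProjection hUn (hg.toLp _)
  set p : Lp ℝ 2 μ := ((U.eqLocus (1 : Lp ℝ 2 μ →L[ℝ] Lp ℝ 2 μ)).orthogonalProjectionOnto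
    (hg.toLp _) : Lp ℝ 2 μ) with hp
  have hUp : U p = p :=
    ((U.eqLocus (1 : Lp ℝ 2 μ →L[ℝ] Lp ℝ 2 μ)).orthogonalProjectionOnto (hg.toLp _)).2
  have hpm : Measurable (p : Ω → ℝ) := (Lp.stronglyMeasurable p).measurable
  have hpinv : (p : Ω → ℝ) ∘ f =ᵐ[μ] p := by
    have := Lp.coeFn_compMeasurePreserving p hf
    rw [show Lp.compMeasurePreserving f hf p = p from hUp] at this
    exact this.symm
  obtain ⟨h, hhm, hhp⟩ := exists_invariant_version hf hpm hpinv
  have hpi : Integrable (p : Ω → ℝ) μ := (Lp.memLp p).integrable (by norm_num)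
  refine ⟨h, hhm, hpi.congr hhp.symm, ?_⟩
  have hit : ∀ j : ℕ, ((U^[j] (hg.toLp _) : Lp ℝ 2 μ) : Ω → ℝ)
      =ᵐ[μ] fun x => A.indicator 1 (f^[j] x) := by
    intro j
    have h1 : U^[j] (hg.toLp _) = Lp.compMeasurePreserving f^[j] (hf.iterate j) (hg.toLp _) := by
      rw [← Lp.compMeasurePreserving_iterate hf j]; rfl
    rw [h1, Lp.toLp_compMeasurePreserving]
    exact MemLp.coeFn_toLp _
  have hav : ∀ n : ℕ, ((birkhoffAverage ℝ U _root_.id n (hg.toLp _) : Lp ℝ 2 μ) : Ω → ℝ)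
      =ᵐ[μ] freq f A n := by
    intro n
    have h1 := Lp.coeFn_smul ((n : ℝ)⁻¹) (∑ j ∈ Finset.range n, U^[j] (hg.toLp _))
    have h2 := Lp.coeFn_fun_finsetSum (Finset.range n) (fun j => U^[j] (hg.toLp _))
    filter_upwards [h1, h2, ae_all_iff.2 hit] with x hx1 hx2 hx3
    simp only [birkhoffAverage, birkhoffSum, _root_.id]
    rw [hx1, Pi.smul_apply, hx2, freq, smul_eq_mul]
    simp [hx3]
  have hl2 : Tendsto (fun n => eLpNorm (fun x => freq f A n x - h x) 2 μ) atTop (𝓝 0) := by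
    have h0 := (Lp.tendsto_Lp_iff_tendsto_eLpNorm' _ _).1 hlim
    refine h0.congr fun n => eLpNorm_congr_ae ?_
    filter_upwards [hav n, hhp] with x hx1 hx2
    simp [hx1, hx2, hp]
  refine tendsto_of_tendsto_of_tendsto_of_le_of_le tendsto_const_nhds hl2 (fun _ => zero_le)
    fun n => ?_
  refine eLpNorm_le_eLpNorm_of_exponent_le (by norm_num) ?_
  exact ((measurable_freq hf.measurable hA n).sub
    (hhm.mono (MeasurableSpace.invariants_le f) le_rfl)).aestronglyMeasurable

/-- Invariant measures integrate visit frequencies over invariant sets like the indicator. -/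
lemma setIntegral_freq (hf : MeasurePreserving f μ μ) {A B : Set Ω} (hA : MeasurableSet A)
    (hB : MeasurableSet B) (hBf : f ⁻¹' B = B) {n : ℕ} (hn : n ≠ 0) :
    ∫ x in B, freq f A n x ∂μ = μ.real (A ∩ B) := by
  have hBi : ∀ j : ℕ, f^[j] ⁻¹' B = B := by
    intro j
    induction j with
    | zero => simp
    | succ j ih => rw [Function.iterate_succ, preimage_comp, ih, hBf]
  have h1 : ∀ j : ℕ, ∫ x in B, A.indicator (1 : Ω → ℝ) (f^[j] x) ∂μ = μ.real (A ∩ B) := by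
    intro j
    have : (fun x => A.indicator (1 : Ω → ℝ) (f^[j] x)) = (f^[j] ⁻¹' A).indicator 1 := by
      funext x; simp [indicator]; rfl
    rw [this, integral_indicator_one (hf.measurable.iterate j hA),
      measureReal_restrict_apply (hf.measurable.iterate j hA)]
    conv_lhs => rw [← hBi j, ← preimage_inter]
    exact (hf.iterate j).measureReal_preimage (hA.inter hB).nullMeasurableSet
  simp only [freq]
  rw [integral_const_mul, integral_finsetSum]
  · simp only [h1]
    rw [Finset.sum_const, Finset.card_range, nsmul_eq_mul, inv_mul_cancel_left₀]
    exact_mod_cast hn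
  · intro j _
    refine Integrable.integrableOn ?_
    exact (hf.iterate j).integrable_comp_of_integrable ((integrable_const (1:ℝ)).indicator hA)

end MeanErgodic

/-! ### Ergodic decomposition -/

section Decomposition

variable {Ω : Type*} [MeasurableSpace Ω] [StandardBorelSpace Ω] {f : Ω → Ω} {μ : Measure Ω}
  [IsProbabilityMeasure μ]

/-- The candidate ergodic component of `μ` at `x`: the conditional measure of `μ` at `x` given the
σ-algebra of strictly `f`-invariant measurable sets. -/
noncomputable def ergComp (f : Ω → Ω) (μ : Measure Ω) [IsProbabilityMeasure μ] (x : Ω) :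
    Measure Ω :=
  ProbabilityTheory.condExpKernel μ (MeasurableSpace.invariants f) x

instance (x : Ω) : IsProbabilityMeasure (ergComp f μ x) := by
  have : Nonempty Ω := ⟨x⟩
  unfold ergComp
  infer_instance

lemma measurable_ergComp_real {A : Set Ω} (hA : MeasurableSet A) :
    Measurable[MeasurableSpace.invariants f] fun x => (ergComp f μ x).real A :=
  Measurable.ennreal_toReal
    (ProbabilityTheory.measurable_condExpKernel (μ := μ) (m := MeasurableSpace.invariants f) hA)

lemma measurable_ergComp_real' {A : Set Ω} (hA : MeasurableSet A) :
    Measurable fun x => (ergComp f μ x).real A :=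
  (measurable_ergComp_real hA).mono (MeasurableSpace.invariants_le f) le_rfl

lemma integrable_ergComp_ae {ψ : Ω → ℝ} (hψ : Integrable ψ μ) :
    ∀ᵐ x ∂μ, Integrable ψ (ergComp f μ x) :=
  hψ.condExpKernel_ae

lemma integrable_integral_ergComp {ψ : Ω → ℝ} (hψ : Integrable ψ μ) :
    Integrable (fun x => ∫ y, ψ y ∂ergComp f μ x) μ :=
  hψ.integral_condExpKernel

lemma integral_integral_ergComp {ψ : Ω → ℝ} (hψ : Integrable ψ μ) :
    ∫ x, ∫ y, ψ y ∂ergComp f μ x ∂μ = ∫ x, ψ x ∂μ := by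
  have hm := MeasurableSpace.invariants_le f
  rw [← integral_condExp hm (f := ψ)]
  exact integral_congr_ae (ProbabilityTheory.condExp_ae_eq_integral_condExpKernel hm hψ).symm

lemma setIntegral_ergComp_real {A B : Set Ω} (hA : MeasurableSet A)
    (hB : MeasurableSet[MeasurableSpace.invariants f] B) :
    ∫ x in B, (ergComp f μ x).real A ∂μ = μ.real (A ∩ B) := by
  have hm := MeasurableSpace.invariants_le f
  have h1 := ProbabilityTheory.condExpKernel_ae_eq_condExp (μ := μ) hm hA
  have h2 : ∫ x in B, (ergComp f μ x).real A ∂μ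
      = ∫ x in B, (μ[A.indicator (fun _ => (1 : ℝ)) | MeasurableSpace.invariants f]) x ∂μ :=
    integral_congr_ae (ae_restrict_of_ae h1)
  rw [h2, setIntegral_condExp hm ((integrable_const _).indicator hA) hB]
  have := integral_indicator_one (μ := μ.restrict B) hA
  rw [measureReal_restrict_apply hA] at this
  exact this

lemma integral_ergComp_real {A : Set Ω} (hA : MeasurableSet A) :
    ∫ x, (ergComp f μ x).real A ∂μ = μ.real A := by
  have := setIntegral_ergComp_real (f := f) (μ := μ) hA MeasurableSet.univ
  simpa using this

lemma ae_ergComp_invariant_set {B : Set Ω}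
    (hB : MeasurableSet[MeasurableSpace.invariants f] B) :
    ∀ᵐ x ∂μ, (ergComp f μ x).real B = B.indicator 1 x := by
  have hm := MeasurableSpace.invariants_le f
  have hB' := hm _ hB
  have h1 := ProbabilityTheory.condExpKernel_ae_eq_condExp (μ := μ) hm hB'
  rw [condExp_of_stronglyMeasurable hm (stronglyMeasurable_const.indicator hB)
    ((integrable_const _).indicator hB')] at h1
  exact h1

/-- An invariant function is almost surely constant on almost every component. -/
lemma ae_ergComp_eq_const {h : Ω → ℝ} (hh : Measurable[MeasurableSpace.invariants f] h) :
    ∀ᵐ x ∂μ, ∀ᵐ y ∂ergComp f μ x, h y = h x := by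
  have hm := MeasurableSpace.invariants_le f
  have hmeas : ∀ q : ℚ, MeasurableSet[MeasurableSpace.invariants f] {y | h y ≤ q} := fun q =>
    measurableSet_le hh measurable_const
  have h1 := ae_all_iff.2 fun q : ℚ => ae_ergComp_invariant_set (μ := μ) (hmeas q)
  filter_upwards [h1] with x hx
  have h2 : ∀ q : ℚ, ∀ᵐ y ∂ergComp f μ x, (h y ≤ q ↔ h x ≤ q) := by
    intro q
    have hq := hx q
    by_cases hxq : h x ≤ q
    · rw [indicator_of_mem (show x ∈ {y | h y ≤ q} from hxq), Pi.one_apply] at hq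
      have : ∀ᵐ y ∂ergComp f μ x, y ∈ {y | h y ≤ q} := by
        exact (mem_ae_iff_prob_eq_one (hm _ (hmeas q))).2 ((ENNReal.toReal_eq_one_iff _).1 hq)
      filter_upwards [this] with y hy
      exact ⟨fun _ => hxq, fun _ => hy⟩
    · rw [indicator_of_notMem (show x ∉ {y | h y ≤ q} from hxq)] at hq
      have : ∀ᵐ y ∂ergComp f μ x, y ∉ {y | h y ≤ q} := by
        rw [← measure_eq_zero_iff_ae_notMem, ← measureReal_eq_zero_iff]
        exact hq
      filter_upwards [this] with y hy
      exact ⟨fun h => absurd h hy, fun h => absurd h hxq⟩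
  filter_upwards [ae_all_iff.2 h2] with y hy
  refine le_antisymm ?_ ?_
  · refine le_of_forall_lt_rat_imp_le fun q hq => (hy q).2 hq.le
  · refine le_of_forall_lt_rat_imp_le fun q hq => (hy q).1 hq.le

lemma isPiSystem_genAlg : IsPiSystem (genAlg Ω) := fun _ hs _ ht _ =>
  isSetAlgebra_genAlg.inter_mem hs ht

lemma ae_ergComp_invMeasure (hf : MeasurePreserving f μ μ) :
    ∀ᵐ x ∂μ, InvMeasure f (ergComp f μ x) := by
  have hm := MeasurableSpace.invariants_le f
  have h1 : ∀ A ∈ genAlg Ω, ∀ᵐ x ∂μ, (ergComp f μ x).real (f ⁻¹' A) = (ergComp f μ x).real A := by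
    intro A hA
    have hA := measurableSet_genAlg hA
    have hIntg : ∀ {C : Set Ω}, MeasurableSet C →
        Integrable (fun x => (ergComp f μ x).real C) μ := fun hC => by
      refine Integrable.of_bound (measurable_ergComp_real' hC).aestronglyMeasurable 1 ?_
      exact ae_of_all _ fun x => by simp [abs_of_nonneg, measureReal_le_one]
    have key := ae_eq_condExp_of_forall_setIntegral_eq hm (μ := μ)
      (f := A.indicator fun _ => (1 : ℝ)) (g := fun x => (ergComp f μ x).real (f ⁻¹' A))
      ((integrable_const _).indicator hA)
      (fun s _ _ => (hIntg (hf.measurable hA)).integrableOn) ?_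
      (measurable_ergComp_real (hf.measurable hA)).stronglyMeasurable.aestronglyMeasurable
    · have h2 := ProbabilityTheory.condExpKernel_ae_eq_condExp (μ := μ) hm hA
      filter_upwards [key, h2] with x hx1 hx2
      rw [hx1]; exact hx2.symm
    · intro s hs _
      rw [setIntegral_ergComp_real (hf.measurable hA) hs]
      have := integral_indicator_one (μ := μ.restrict s) hA
      rw [measureReal_restrict_apply hA] at this
      refine Eq.trans ?_ this.symm
      obtain ⟨hs', hfs⟩ := MeasurableSpace.measurableSet_invariants.1 hs
      conv_lhs => rw [← hfs, ← preimage_inter]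
      exact hf.measureReal_preimage (hA.inter hs').nullMeasurableSet
  filter_upwards [(ae_ball_iff countable_genAlg).2 h1] with x hx
  have : (ergComp f μ x).map f = ergComp f μ x := by
    have := Measure.isProbabilityMeasure_map (μ := ergComp f μ x) hf.measurable.aemeasurable
    refine ext_of_generate_finite _ generateFrom_genAlg isPiSystem_genAlg ?_ (by simp)
    intro A hA
    rw [Measure.map_apply hf.measurable (measurableSet_genAlg hA)]
    exact (measureReal_eq_measureReal_iff).1 (hx A hA)
  intro s hs
  rw [← Measure.map_apply hf.measurable hs, this]

/-- Along a subsequence, visit frequencies converge in `L¹` of almost every component to the value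
at the base point of an invariant function. -/
lemma ae_exists_tendsto_freq (hf : MeasurePreserving f μ μ) {A : Set Ω} (hA : MeasurableSet A) :
    ∃ (h : Ω → ℝ) (ns : ℕ → ℕ), StrictMono ns ∧ ∀ᵐ x ∂μ,
      Tendsto (fun k => ∫ y, |freq f A (ns k) y - h x| ∂ergComp f μ x) atTop (𝓝 0) := by
  have hm := MeasurableSpace.invariants_le f
  obtain ⟨h, hhm, hhi, hlim⟩ := exists_tendsto_freq hf hA
  have hfi : ∀ n, Integrable (freq f A n) μ := by
    intro n
    refine Integrable.const_mul (integrable_finsetSum _ fun j _ => ?_) _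
    exact (hf.iterate j).integrable_comp_of_integrable ((integrable_const (1:ℝ)).indicator hA)
  have hdi : ∀ n, Integrable (fun x => |freq f A n x - h x|) μ := fun n => ((hfi n).sub hhi).abs
  set D : ℕ → Ω → ℝ := fun n x => ∫ y, |freq f A n y - h y| ∂ergComp f μ x with hD
  have hDi : ∀ n, Integrable (D n) μ := fun n => integrable_integral_ergComp (hdi n)
  have hDlim : Tendsto (fun n => eLpNorm (D n - 0) 1 μ) atTop (𝓝 0) := by
    refine hlim.congr fun n => ?_
    rw [sub_zero, eLpNorm_one_eq_lintegral_enorm, eLpNorm_one_eq_lintegral_enorm,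
      ← ofReal_integral_norm_eq_lintegral_enorm (f := fun x => freq f A n x - h x)
        ((hfi n).sub hhi),
      ← ofReal_integral_norm_eq_lintegral_enorm (hDi n)]
    congr 1
    have : ∀ x, ‖D n x‖ = D n x := fun x =>
      Real.norm_of_nonneg (integral_nonneg fun y => abs_nonneg _)
    simp only [this]
    exact (integral_integral_ergComp (hdi n)).symm
  obtain ⟨ns, hns, hae⟩ := (tendstoInMeasure_of_tendsto_eLpNorm one_ne_zero
    (fun n => (hDi n).aestronglyMeasurable) aestronglyMeasurable_zero hDlim).exists_seq_tendsto_ae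
  refine ⟨h, ns, hns, ?_⟩
  filter_upwards [hae, ae_ergComp_eq_const (μ := μ) hhm] with x hx hc
  refine hx.congr fun k => integral_congr_ae ?_
  filter_upwards [hc] with y hy
  rw [hy]

/-- Almost every component is an ergodic invariant probability measure. -/
lemma ae_ergComp_ergodicInv (hf : MeasurePreserving f μ μ) :
    ∀ᵐ x ∂μ, ErgodicInv f (ergComp f μ x) := by
  have h1 : ∀ A : Set Ω, ∃ (h : Ω → ℝ) (ns : ℕ → ℕ), A ∈ genAlg Ω → StrictMono ns ∧ ∀ᵐ x ∂μ,
      Tendsto (fun k => ∫ y, |freq f A (ns k) y - h x| ∂ergComp f μ x) atTop (𝓝 0) := by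
    intro A
    by_cases hA : A ∈ genAlg Ω
    · obtain ⟨h, ns, hh⟩ := ae_exists_tendsto_freq hf (measurableSet_genAlg hA)
      exact ⟨h, ns, fun _ => hh⟩
    · exact ⟨0, 0, fun h => absurd h hA⟩
  choose h ns hh using h1
  have h2 := (ae_ball_iff countable_genAlg).2 fun A hA => (hh A hA).2
  filter_upwards [h2, ae_ergComp_invMeasure hf] with x hx hinv
  refine ⟨hinv, fun B hB hBf => ?_⟩
  set ν := ergComp f μ x with hν
  have hmp := InvMeasure.measurePreserving hf.measurable hinv
  have key : ∀ A ∈ genAlg Ω, ∀ C, MeasurableSet C → f ⁻¹' C = C →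
      ν.real (A ∩ C) = h A x * ν.real C := by
    intro A hA C hC hCf
    have hAm := measurableSet_genAlg hA
    have hfi : ∀ n, Integrable (freq f A n) ν := by
      intro n
      refine Integrable.const_mul (integrable_finsetSum _ fun j _ => ?_) _
      exact (hmp.iterate j).integrable_comp_of_integrable ((integrable_const (1:ℝ)).indicator hAm)
    have hle : ∀ k, 1 ≤ k → |ν.real (A ∩ C) - h A x * ν.real C|
        ≤ ∫ y, |freq f A (ns A k) y - h A x| ∂ν := by
      intro k hk
      have hne : ns A k ≠ 0 := by
        have := (hh A hA).1.id_le k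
        simp only [_root_.id] at this
        omega
      have e : ν.real (A ∩ C) - h A x * ν.real C = ∫ y in C, (freq f A (ns A k) y - h A x) ∂ν := by
        rw [integral_sub (hfi _).integrableOn (integrable_const _), setIntegral_freq hmp hAm hC hCf hne]
        simp [mul_comm]
      rw [e]
      refine (abs_integral_le_integral_abs).trans ?_
      exact setIntegral_le_integral ((hfi _).sub (integrable_const _)).abs
        (ae_of_all _ fun y => abs_nonneg _)
    have h0 : |ν.real (A ∩ C) - h A x * ν.real C| ≤ 0 :=
      ge_of_tendsto (hx A hA) (eventually_atTop.2 ⟨1, hle⟩)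
    exact sub_eq_zero.1 (abs_eq_zero.1 (le_antisymm h0 (abs_nonneg _)))
  have hmul : ∀ A ∈ genAlg Ω, ν.real (A ∩ B) = ν.real B * ν.real A := by
    intro A hA
    have e1 := key A hA univ MeasurableSet.univ rfl
    rw [inter_univ, probReal_univ, mul_one] at e1
    rw [key A hA B hB hBf, e1, mul_comm]
  have hext : ν.restrict B = ν B • ν := by
    refine ext_of_generate_finite _ generateFrom_genAlg isPiSystem_genAlg ?_ (by simp)
    intro A hA
    rw [Measure.restrict_apply (measurableSet_genAlg hA), Measure.smul_apply, smul_eq_mul]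
    have := hmul A hA
    simp only [measureReal_def] at this
    rw [← ENNReal.toReal_mul] at this
    exact (ENNReal.toReal_eq_toReal_iff' (measure_ne_top _ _)
      (ENNReal.mul_ne_top (measure_ne_top _ _) (measure_ne_top _ _))).1 this
  have hBB := congrArg (fun m : Measure Ω => m B) hext
  simp only [Measure.restrict_apply hB, inter_self, Measure.smul_apply, smul_eq_mul] at hBB
  by_cases h0 : ν B = 0
  · exact Or.inl h0
  · right
    have := (ENNReal.mul_eq_left h0 (measure_ne_top _ _)).1 hBB.symm
    exact this

end Decomposition

/-! ### Entropy rates of the ergodic components -/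

section Jacobs

variable {Ω ι κ : Type*} [MeasurableSpace Ω] [StandardBorelSpace Ω] {f : Ω → Ω} {μ : Measure Ω}
  [IsProbabilityMeasure μ] [Fintype ι] [Fintype κ]

lemma measurable_ent_ergComp {Y : Ω → κ} (hY : FinMeas Y) :
    Measurable fun x => ent (ergComp f μ x) Y :=
  Finset.measurable_fun_sum _ fun c _ =>
    Real.continuous_negMulLog.measurable.comp (measurable_ergComp_real' (hY c))

lemma integrable_ent_ergComp {Y : Ω → κ} (hY : FinMeas Y) :
    Integrable (fun x => ent (ergComp f μ x) Y) μ := by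
  refine Integrable.of_bound (measurable_ent_ergComp hY).aestronglyMeasurable (Fintype.card κ) ?_
  refine ae_of_all _ fun x => ?_
  rw [Real.norm_of_nonneg (ent_nonneg _)]
  exact ent_le_card _

lemma integrable_hrate_ergComp (hf : Measurable f) {X : Ω → ι} (hX : FinMeas X) :
    Integrable (fun x => hrate f (ergComp f μ x) X) μ := by
  have hm : Measurable fun x => hrate f (ergComp f μ x) X :=
    Measurable.iInf fun n => (measurable_ent_ergComp (hX.itin hf (n + 1))).div_const _
  refine Integrable.of_bound hm.aestronglyMeasurable (Fintype.card (Fin 1 → ι)) ?_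
  refine ae_of_all _ fun x => ?_
  rw [Real.norm_of_nonneg (hrate_nonneg _)]
  refine (hrate_le X 1 one_ne_zero).trans ?_
  rw [Nat.cast_one, div_one]
  exact ent_le_card _

/-- The partition into the level sets of `x ↦ (μ_x(Y = c))_c`, discretised finely enough, is
invariant, and conditioning on it brings the entropy of `Y` close to the mean of its entropies
under the components. -/
lemma exists_invariant_label [DecidableEq κ] {Y : Ω → κ} (hY : FinMeas Y) {δ : ℝ} (hδ : 0 < δ) :
    ∃ (N : ℕ) (β : Ω → κ → Fin (N + 1)), FinMeas β ∧ (∀ x, β (f x) = β x) ∧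
      cent μ Y β ≤ ∫ x, ent (ergComp f μ x) Y ∂μ + Fintype.card κ * δ := by
  have hm := MeasurableSpace.invariants_le f
  obtain ⟨r, hr, hunif⟩ := Metric.uniformContinuousOn_iff.1
    ((isCompact_Icc (a := (0 : ℝ)) (b := 1)).uniformContinuousOn_of_continuous
      Real.continuous_negMulLog.continuousOn) δ hδ
  obtain ⟨N, hN⟩ := exists_nat_one_div_lt hr
  set p : κ → Ω → ℝ := fun c x => (ergComp f μ x).real (Y ⁻¹' {c}) with hp
  have hp0 : ∀ c x, 0 ≤ p c x := fun c x => measureReal_nonneg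
  have hp1 : ∀ c x, p c x ≤ 1 := fun c x => measureReal_le_one
  have hpm : ∀ c, Measurable[MeasurableSpace.invariants f] (p c) := fun c =>
    measurable_ergComp_real (hY c)
  have hpi : ∀ c, Integrable (p c) μ := fun c => by
    refine Integrable.of_bound ((hpm c).mono hm le_rfl).aestronglyMeasurable 1 ?_
    exact ae_of_all _ fun x => by rw [Real.norm_of_nonneg (hp0 c x)]; exact hp1 c x
  have hfl : ∀ c x, ⌊((N + 1 : ℕ) : ℝ) * p c x⌋₊ < N + 1 + 1 := by
    intro c x
    have : ⌊((N + 1 : ℕ) : ℝ) * p c x⌋₊ ≤ N + 1 := by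
      refine Nat.floor_le_of_le ?_
      have h0 : (0 : ℝ) ≤ ((N + 1 : ℕ) : ℝ) := by positivity
      nlinarith [hp1 c x]
    omega
  set β : Ω → κ → Fin (N + 1 + 1) := fun x c => ⟨_, hfl c x⟩ with hβ
  have hβm : ∀ b, MeasurableSet[MeasurableSpace.invariants f] (β ⁻¹' {b}) := by
    intro b
    have : β ⁻¹' {b} = ⋂ c, {x | ⌊((N + 1 : ℕ) : ℝ) * p c x⌋₊ = b c} := by
      ext x
      simp [hβ, funext_iff, Fin.ext_iff]
    rw [this]
    refine MeasurableSet.iInter fun c => ?_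
    have h1 : Measurable[MeasurableSpace.invariants f] fun x => ⌊((N + 1 : ℕ) : ℝ) * p c x⌋₊ :=
      Nat.measurable_floor.comp ((hpm c).const_mul _)
    exact h1 (measurableSet_singleton _)
  have hβM : FinMeas β := fun b => hm _ (hβm b)
  -- points with the same label have nearby component probabilities
  have hclose : ∀ x y, β x = β y → ∀ c, p c x ≤ p c y + 1 / (N + 1) := by
    intro x y hxy c
    have h1 : ⌊((N + 1 : ℕ) : ℝ) * p c x⌋₊ = ⌊((N + 1 : ℕ) : ℝ) * p c y⌋₊ := by
      have := congrFun hxy c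
      simpa [hβ, Fin.ext_iff] using this
    have h2 := Nat.lt_floor_add_one (((N + 1 : ℕ) : ℝ) * p c x)
    have h3 := Nat.floor_le (a := ((N + 1 : ℕ) : ℝ) * p c y)
      (mul_nonneg (by positivity) (hp0 c y))
    rw [h1] at h2
    have hpos : (0 : ℝ) < N + 1 := by positivity
    push_cast at h2 h3
    have h4 : (N + 1 : ℝ) * (p c x) ≤ (N + 1) * (p c y + 1 / (N + 1)) := by
      rw [mul_add, mul_one_div_cancel hpos.ne']
      linarith
    exact le_of_mul_le_mul_left h4 hpos
  refine ⟨N + 1, β, hβM, fun x => ?_, ?_⟩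
  · funext c
    have : p c (f x) = p c x :=
      congrFun (MeasurableSpace.comp_eq_of_measurable_invariants (hpm c)) x
    simp [hβ, this]
  have hpcb : ∀ c b, μ.real (Y ⁻¹' {c} ∩ β ⁻¹' {b}) = ∫ x in β ⁻¹' {b}, p c x ∂μ := fun c b =>
    (setIntegral_ergComp_real (hY c) (hβm b)).symm
  have hIntg : Integrable (fun x => ent (ergComp f μ x) Y + Fintype.card κ * δ) μ :=
    (integrable_ent_ergComp hY).add (integrable_const _)
  have hb : ∀ b, ∑ c, Real.negMulLog (μ.real (Y ⁻¹' {c} ∩ β ⁻¹' {b}))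
      - Real.negMulLog (μ.real (β ⁻¹' {b}))
      ≤ ∫ x in β ⁻¹' {b}, (ent (ergComp f μ x) Y + Fintype.card κ * δ) ∂μ := by
    intro b
    set P := μ.real (β ⁻¹' {b}) with hP
    by_cases hP0 : P = 0
    · have hz : ∀ c, μ.real (Y ⁻¹' {c} ∩ β ⁻¹' {b}) = 0 := fun c =>
        le_antisymm ((measureReal_mono inter_subset_right).trans hP0.le) measureReal_nonneg
      simp only [hz, hP0, Real.negMulLog_zero, Finset.sum_const_zero, sub_zero]
      have : μ (β ⁻¹' {b}) = 0 := by
        rwa [hP, measureReal_eq_zero_iff] at hP0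
      rw [Measure.restrict_eq_zero.2 this, integral_zero_measure]
    have hPpos : 0 < P := lt_of_le_of_ne measureReal_nonneg (Ne.symm hP0)
    set q : κ → ℝ := fun c => μ.real (Y ⁻¹' {c} ∩ β ⁻¹' {b}) / P with hq
    have hqP : ∀ c, μ.real (Y ⁻¹' {c} ∩ β ⁻¹' {b}) = P * q c := fun c => by
      rw [hq]; field_simp
    have hqsum : ∑ c, q c = 1 := by
      rw [hq, ← Finset.sum_div, div_eq_one_iff_eq hP0]
      rw [hP]
      simp only [hpcb]
      rw [← integral_finsetSum _ fun c _ => (hpi c).integrableOn]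
      have : ∀ x, ∑ c, p c x = 1 := fun x => sum_real_fibers hY
      simp [this]
    have e : ∑ c, Real.negMulLog (μ.real (Y ⁻¹' {c} ∩ β ⁻¹' {b})) - Real.negMulLog P
        = ∫ x in β ⁻¹' {b}, ∑ c, Real.negMulLog (q c) ∂μ := by
      simp only [hqP, Real.negMulLog_mul]
      rw [Finset.sum_add_distrib, ← Finset.sum_mul, hqsum, ← Finset.mul_sum, setIntegral_const,
        smul_eq_mul]
      ring
    rw [e]
    refine setIntegral_mono_on (integrable_const _) hIntg.integrableOn (hβM b) fun x hx => ?_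
    have hterm : ∀ c, Real.negMulLog (q c) ≤ Real.negMulLog (p c x) + δ := by
      intro c
      have hu : μ.real (Y ⁻¹' {c} ∩ β ⁻¹' {b}) ≤ (p c x + 1 / (N + 1)) * P := by
        rw [hpcb]
        have : ∫ y in β ⁻¹' {b}, p c y ∂μ ≤ ∫ y in β ⁻¹' {b}, (p c x + 1 / (N + 1)) ∂μ :=
          setIntegral_mono_on (hpi c).integrableOn (integrable_const _) (hβM b) fun y hy =>
            hclose y x (hy.trans hx.symm) c
        refine this.trans_eq ?_
        rw [setIntegral_const, smul_eq_mul, mul_comm]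
      have hl : (p c x - 1 / (N + 1)) * P ≤ μ.real (Y ⁻¹' {c} ∩ β ⁻¹' {b}) := by
        rw [hpcb]
        have : ∫ y in β ⁻¹' {b}, (p c x - 1 / (N + 1)) ∂μ ≤ ∫ y in β ⁻¹' {b}, p c y ∂μ :=
          setIntegral_mono_on (integrable_const _) (hpi c).integrableOn (hβM b) fun y hy => by
            linarith [hclose x y (hx.trans hy.symm) c]
        refine le_trans (le_of_eq ?_) this
        rw [setIntegral_const, smul_eq_mul, mul_comm]
      have hu' : q c ≤ p c x + 1 / (N + 1) := (div_le_iff₀ hPpos).2 hu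
      have hl' : p c x - 1 / (N + 1) ≤ q c := (le_div_iff₀ hPpos).2 hl
      have hq0 : 0 ≤ q c := div_nonneg measureReal_nonneg hPpos.le
      have hq1 : q c ≤ 1 := by
        rw [hq, div_le_one hPpos]; exact measureReal_mono inter_subset_right
      have := hunif (q c) ⟨hq0, hq1⟩ (p c x) ⟨hp0 c x, hp1 c x⟩
        (by rw [Real.dist_eq]; exact lt_of_le_of_lt (abs_le.2 ⟨by linarith, by linarith⟩) hN)
      rw [Real.dist_eq] at this
      linarith [(abs_lt.1 this).2]
    refine (Finset.sum_le_sum fun c _ => hterm c).trans_eq ?_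
    rw [Finset.sum_add_distrib]
    simp [ent, hp]
  have hcent : cent μ Y β = ∑ b, (∑ c, Real.negMulLog (μ.real (Y ⁻¹' {c} ∩ β ⁻¹' {b}))
      - Real.negMulLog (μ.real (β ⁻¹' {b}))) := by
    rw [Finset.sum_sub_distrib, cent, ent, ent, Fintype.sum_prod_type_right]
    congr 1
    refine Finset.sum_congr rfl fun b _ => Finset.sum_congr rfl fun c _ => ?_
    congr 2
    ext x; simp
  rw [hcent]
  refine (Finset.sum_le_sum fun b _ => hb b).trans_eq ?_
  rw [← integral_iUnion_fintype hβM ?_ fun b => hIntg.integrableOn]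
  · have : (⋃ b, β ⁻¹' {b}) = univ := by ext; simp
    rw [this, Measure.restrict_univ, integral_add (integrable_ent_ergComp hY) (integrable_const _)]
    simp
  · intro b b' hbb
    refine disjoint_left.2 fun x hx hx' => hbb ?_
    exact (hx : β x = b).symm.trans hx'

lemma hrate_le_integral_ent (hf : MeasurePreserving f μ μ) (hinv : InvMeasure f μ) {X : Ω → ι}
    (hX : FinMeas X) (m : ℕ) :
    hrate f μ X ≤ ∫ x, ent (ergComp f μ x) (itin f X (m + 1)) / (m + 1) ∂μ := by
  classical
  refine le_of_forall_pos_le_add fun ε hε => ?_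
  have hY := hX.itin hf.measurable (m + 1)
  set K : ℝ := ((Fintype.card (Fin (m + 1) → ι) : ℕ) : ℝ) with hK
  have hK0 : 0 ≤ K := by positivity
  obtain ⟨N, β, hβ, hβf, hc⟩ := exists_invariant_label (f := f) (μ := μ) hY
    (δ := ε / (K + 1)) (by positivity)
  refine (hrate_le_cent_div hf.measurable hinv hX hβ hβf m).trans ?_
  rw [integral_div]
  have hm : (1 : ℝ) ≤ m + 1 := by
    have : (0 : ℝ) ≤ m := by positivity
    linarith
  have h1 : K * (ε / (K + 1)) ≤ ε := by
    rw [mul_div_assoc', div_le_iff₀ (by positivity)]; nlinarith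
  calc _ ≤ (∫ x, ent (ergComp f μ x) (itin f X (m + 1)) ∂μ + ε) / (m + 1) := by
        gcongr; exact hc.trans (by gcongr)
    _ ≤ _ := by
        rw [add_div]; gcongr; exact div_le_self hε.le hm

/-- The entropy rate of an invariant measure is at most the mean of the entropy rates of its
ergodic components. -/
lemma hrate_le_integral_hrate (hf : MeasurePreserving f μ μ) (hinv : InvMeasure f μ) {X : Ω → ι}
    (hX : FinMeas X) : hrate f μ X ≤ ∫ x, hrate f (ergComp f μ x) X ∂μ := by
  have hlim : Tendsto (fun m : ℕ => ∫ x, ent (ergComp f μ x) (itin f X (m + 1)) / (m + 1) ∂μ)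
      atTop (𝓝 (∫ x, hrate f (ergComp f μ x) X ∂μ)) := by
    refine tendsto_integral_of_dominated_convergence (fun _ => (Fintype.card ι : ℝ)) ?_
      (integrable_const _) ?_ ?_
    · exact fun m => ((measurable_ent_ergComp
        (hX.itin hf.measurable (m + 1))).div_const _).aestronglyMeasurable
    · intro m
      filter_upwards [ae_ergComp_invMeasure hf] with x hx
      rw [Real.norm_of_nonneg (div_nonneg (ent_nonneg _) (by positivity)),
        div_le_iff₀ (by positivity), mul_comm]
      refine (ent_itin_le hf.measurable hx hX (m + 1)).trans ?_
      push_cast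
      gcongr
      exact ent_le_card X
    · filter_upwards [ae_ergComp_invMeasure hf] with x hx
      exact tendsto_hrate hf.measurable hx hX
  exact ge_of_tendsto' hlim fun m => hrate_le_integral_ent hf hinv hX m

lemma integral_ent_ergComp_le {Y : Ω → κ} (hY : FinMeas Y) :
    ∫ x, ent (ergComp f μ x) Y ∂μ ≤ ent μ Y := by
  have hpi : ∀ c, Integrable (fun x => (ergComp f μ x).real (Y ⁻¹' {c})) μ := fun c => by
    refine Integrable.of_bound (measurable_ergComp_real' (hY c)).aestronglyMeasurable 1 ?_
    exact ae_of_all _ fun x => by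
      rw [Real.norm_of_nonneg measureReal_nonneg]; exact measureReal_le_one
  have hni : ∀ c, Integrable
      (fun x => Real.negMulLog ((ergComp f μ x).real (Y ⁻¹' {c}))) μ := fun c => by
    refine Integrable.of_bound (Real.continuous_negMulLog.measurable.comp
      (measurable_ergComp_real' (hY c))).aestronglyMeasurable 1 ?_
    exact ae_of_all _ fun x => by
      rw [Real.norm_of_nonneg (Real.negMulLog_nonneg measureReal_nonneg measureReal_le_one)]
      exact negMulLog_le_one measureReal_nonneg
  simp only [ent]
  rw [integral_finsetSum _ fun c _ => hni c]
  refine Finset.sum_le_sum fun c _ => ?_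
  rw [← integral_ergComp_real (f := f) (μ := μ) (hY c)]
  exact Real.concaveOn_negMulLog.le_map_integral Real.continuous_negMulLog.continuousOn
    isClosed_Ici (ae_of_all _ fun x => measureReal_nonneg) (hpi c) (hni c)

lemma integral_hrate_ergComp_le (hf : Measurable f) {X : Ω → ι} (hX : FinMeas X) :
    ∫ x, hrate f (ergComp f μ x) X ∂μ ≤ hrate f μ X := by
  refine le_ciInf fun n => ?_
  have hY := hX.itin hf (n + 1)
  have h1 : ∫ x, hrate f (ergComp f μ x) X ∂μ
      ≤ ∫ x, ent (ergComp f μ x) (itin f X (n + 1)) / (n + 1) ∂μ := by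
    refine integral_mono (integrable_hrate_ergComp hf hX)
      ((integrable_ent_ergComp hY).div_const _) fun x => ?_
    have := hrate_le (f := f) (μ := ergComp f μ x) X (n + 1) (by omega)
    push_cast at this
    exact this
  refine h1.trans ?_
  rw [integral_div]
  have := integral_ent_ergComp_le (f := f) (μ := μ) hY
  gcongr

/-- If the entropy of `μ` is finite, then so is that of almost every component. -/
lemma ae_bddAbove_rateSet (hf : MeasurePreserving f μ μ) (hinv : InvMeasure f μ)
    (hb : BddAbove (rateSet f μ)) : ∀ᵐ x ∂μ, BddAbove (rateSet f (ergComp f μ x)) := by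
  obtain ⟨C, hC⟩ := hb
  have hRi : ∀ k, Integrable (fun x => hrate f (ergComp f μ x) (genPart k)) μ := fun k =>
    integrable_hrate_ergComp hf.measurable (finMeas_genPart k)
  have hRC : ∀ k, ∫ x, hrate f (ergComp f μ x) (genPart k) ∂μ ≤ C := by
    intro k
    obtain ⟨h, hh, hle⟩ := exists_mem_rateSet_ge (finMeas_genPart k) hf.measurable hinv
    exact (integral_hrate_ergComp_le hf.measurable (finMeas_genPart k)).trans (hle.trans (hC hh))
  have hsup : ∫⁻ x, ⨆ k, ENNReal.ofReal (hrate f (ergComp f μ x) (genPart k)) ∂μ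
      ≤ ENNReal.ofReal C := by
    rw [lintegral_iSup' (fun k => (hRi k).aemeasurable.ennreal_ofReal)]
    · refine iSup_le fun k => ?_
      rw [← ofReal_integral_eq_lintegral_ofReal (hRi k) (ae_of_all _ fun x => hrate_nonneg _)]
      exact ENNReal.ofReal_le_ofReal (hRC k)
    · filter_upwards [ae_ergComp_invMeasure hf] with x hx
      intro k l hkl
      exact ENNReal.ofReal_le_ofReal (hrate_genPart_mono hf.measurable hx hkl)
  have hfin := ae_lt_top' (μ := μ)
    (AEMeasurable.iSup fun k => (hRi k).aemeasurable.ennreal_ofReal)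
    (ne_top_of_le_ne_top ENNReal.ofReal_ne_top hsup)
  filter_upwards [hfin, ae_ergComp_invMeasure hf] with x hx hxi
  refine ⟨(⨆ k, ENNReal.ofReal (hrate f (ergComp f μ x) (genPart k))).toReal + 1, ?_⟩
  intro h hh
  obtain ⟨P, X, hX, rfl, -⟩ := exists_label_of_mem_rateSet hh
  obtain ⟨k, hk⟩ := exists_hrate_le_genPart hf.measurable hxi hX
  refine hk.trans ?_
  gcongr
  rw [← ENNReal.ofReal_le_iff_le_toReal hx.ne]
  exact le_iSup (fun k => ENNReal.ofReal (hrate f (ergComp f μ x) (genPart k))) k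

end Jacobs

/-! ### Approximation by finite convex combinations -/

section Approximation

variable {Ω ι : Type*} [MeasurableSpace Ω] [StandardBorelSpace Ω] {f : Ω → Ω} {μ : Measure Ω}
  [IsProbabilityMeasure μ] [Fintype ι]

lemma ksEntropy_nonneg (ν : Measure Ω) [IsProbabilityMeasure ν] : 0 ≤ ksEntropy f ν := by
  refine Real.sSup_nonneg fun h hh => ?_
  obtain ⟨P, X, -, rfl, -⟩ := exists_label_of_mem_rateSet hh
  exact hrate_nonneg X

/-- The mean over `μ` of the two integrals and of an entropy rate of the components lies in the
closed convex hull of the values at almost every point, hence is approximated by finite convex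
combinations. -/
lemma exists_convex_approx (hf : MeasurePreserving f μ μ) {ψ φ : Ω → ℝ} (hψ : Integrable ψ μ)
    (hφ : Integrable φ μ) {X : Ω → ι} (hX : FinMeas X) {good : Set Ω} (hgood : ∀ᵐ x ∂μ, x ∈ good)
    {ε : ℝ} (hε : 0 < ε) :
    ∃ (n : ℕ) (x : Fin (n + 1) → Ω) (a : Fin (n + 1) → ℝ), (∀ i, 0 < a i) ∧ ∑ i, a i = 1 ∧
      (∀ i, x i ∈ good) ∧
      |(∫ y, ψ y ∂μ) - ∑ i, a i * ∫ y, ψ y ∂ergComp f μ (x i)| < ε ∧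
      |(∫ y, φ y ∂μ) - ∑ i, a i * ∫ y, φ y ∂ergComp f μ (x i)| < ε ∧
      |(∫ y, hrate f (ergComp f μ y) X ∂μ) - ∑ i, a i * hrate f (ergComp f μ (x i)) X| < ε := by
  set G : Ω → ℝ × ℝ × ℝ := fun x =>
    (∫ y, ψ y ∂ergComp f μ x, ∫ y, φ y ∂ergComp f μ x, hrate f (ergComp f μ x) X) with hG
  have i1 := integrable_integral_ergComp (f := f) hψ
  have i2 := integrable_integral_ergComp (f := f) hφ
  have i3 := integrable_hrate_ergComp (μ := μ) hf.measurable hX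
  have hGi : Integrable G μ := i1.prodMk (i2.prodMk i3)
  have hmean : ∫ x, G x ∂μ = (∫ y, ψ y ∂μ, ∫ y, φ y ∂μ, ∫ y, hrate f (ergComp f μ y) X ∂μ) := by
    rw [hG, integral_pair i1 (i2.prodMk i3), integral_pair i2 i3, integral_integral_ergComp hψ,
      integral_integral_ergComp hφ]
  have hmem : ∫ x, G x ∂μ ∈ closure (convexHull ℝ (G '' good)) := by
    refine (convex_convexHull ℝ _).closure.integral_mem isClosed_closure ?_ hGi
    filter_upwards [hgood] with x hx
    exact subset_closure (subset_convexHull ℝ _ (mem_image_of_mem G hx))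
  obtain ⟨v, hv, hdist⟩ := Metric.mem_closure_iff.1 hmem ε hε
  obtain ⟨τ, hτ, z, w, hz, -, hw0, hw1, hwz⟩ := eq_pos_convex_span_of_mem_convexHull hv
  have hz' : ∀ t, ∃ x ∈ good, G x = z t := fun t => hz (mem_range_self t)
  choose x hxg hxz using hz'
  have hne : Fintype.card τ ≠ 0 := by
    intro h0
    have := Fintype.card_eq_zero_iff.1 h0
    simp at hw1
  obtain ⟨n, hn⟩ := Nat.exists_eq_succ_of_ne_zero hne
  let e : Fin (n + 1) ≃ τ := (Fintype.equivFinOfCardEq hn).symm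
  have hsum : ∀ F : τ → ℝ, ∑ i, F (e i) = ∑ t, F t := fun F => e.sum_comp F
  rw [hmean, ← hwz, Prod.dist_eq, Prod.dist_eq, max_lt_iff, max_lt_iff] at hdist
  obtain ⟨d1, d2, d3⟩ := hdist
  rw [Real.dist_eq] at d1 d2 d3
  refine ⟨n, fun i => x (e i), fun i => w (e i), fun i => hw0 _, ?_, fun i => hxg _, ?_, ?_, ?_⟩
  · rw [hsum w, hw1]
  · rw [hsum fun t => w t * ∫ y, ψ y ∂ergComp f μ (x t)]
    simpa [← hxz, hG, Prod.fst_sum] using d1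
  · rw [hsum fun t => w t * ∫ y, φ y ∂ergComp f μ (x t)]
    simpa [← hxz, hG, Prod.fst_sum, Prod.snd_sum] using d2
  · rw [hsum fun t => w t * hrate f (ergComp f μ (x t)) X]
    simpa [← hxz, hG, Prod.snd_sum] using d3

lemma integral_convex_comb {n : ℕ} {ν : Fin n → Measure Ω} {a : Fin n → ℝ} (ha : ∀ i, 0 < a i)
    {ψ : Ω → ℝ} (hψ : ∀ i, Integrable ψ (ν i)) :
    ∫ x, ψ x ∂(∑ i, ENNReal.ofReal (a i) • ν i) = ∑ i, a i * ∫ x, ψ x ∂ν i := by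
  rw [integral_finsetSum_measure fun i _ => (hψ i).smul_measure ENNReal.ofReal_ne_top]
  refine Finset.sum_congr rfl fun i _ => ?_
  rw [integral_smul_measure, ENNReal.toReal_ofReal (ha i).le, smul_eq_mul]

end Approximation

end ErgApprox

open ErgApprox in
/-- approximation of an invariant measure by convex combinations of
ergodic measures, matching two integrals and almost preserving entropy. -/
theorem ergodic_decomposition_approximation {M : Type*} [MetricSpace M] [CompactSpace M]
    [MeasurableSpace M] [BorelSpace M]
    (f : M → M) (hf : Continuous f)
    (η : Measure M) [IsProbabilityMeasure η] (hinv : InvMeasure f η)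
    (ψ φ : M → ℝ) (hψ : Integrable ψ η) (hφ : Integrable φ η)
    (ε : ℝ) (hε : 0 < ε) :
    ∃ (n : ℕ) (ηs : Fin (n+1) → Measure M) (a : Fin (n+1) → ℝ),
      (∀ i, 0 < a i) ∧ (∑ i, a i = 1) ∧
      (∀ i, IsProbabilityMeasure (ηs i) ∧ ErgodicInv f (ηs i)) ∧
      |(∫ x, ψ x ∂η) - ∫ x, ψ x ∂(∑ i, ENNReal.ofReal (a i) • ηs i)| < ε ∧
      |(∫ x, φ x ∂η) - ∫ x, φ x ∂(∑ i, ENNReal.ofReal (a i) • ηs i)| < ε ∧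
      ksEntropy f η ≤ (∑ i, a i * ksEntropy f (ηs i)) + ε := by
  have hmp := InvMeasure.measurePreserving hf.measurable hinv
  -- a partition whose entropy rate is nearly the supremum (also when that is a junk value)
  obtain ⟨P, X, hX, hXε, hXmem⟩ : ∃ (P : Finset (Set M)) (X : M → {A // A ∈ P}), FinMeas X ∧
      ksEntropy f η - ε / 2 < hrate f η X ∧
      ∀ ν, hrate f ν X ∈ rateSet f ν := by
    obtain ⟨h, hh, hlt⟩ := exists_lt_of_lt_csSup (rateSet_nonempty (f := f) η)
      (show ksEntropy f η - ε / 2 < sSup (rateSet f η) from sub_lt_self _ (by positivity))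
    obtain ⟨P, X, hX, rfl, hXmem⟩ := exists_label_of_mem_rateSet hh
    exact ⟨P, X, hX, hlt, hXmem⟩
  have hgood : ∀ᵐ x ∂η, x ∈ {x | ErgodicInv f (ergComp f η x) ∧
      Integrable ψ (ergComp f η x) ∧ Integrable φ (ergComp f η x) ∧
      (BddAbove (rateSet f η) → BddAbove (rateSet f (ergComp f η x)))} := by
    have hb : ∀ᵐ x ∂η, BddAbove (rateSet f η) → BddAbove (rateSet f (ergComp f η x)) := by
      by_cases h : BddAbove (rateSet f η)
      · filter_upwards [ae_bddAbove_rateSet hmp hinv h] with x hx _ using hx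
      · exact ae_of_all _ fun x h' => absurd h' h
    filter_upwards [ae_ergComp_ergodicInv hmp, integrable_ergComp_ae (f := f) hψ,
      integrable_ergComp_ae (f := f) hφ, hb] with x h1 h2 h3 h4
    exact ⟨h1, h2, h3, h4⟩
  obtain ⟨n, x, a, ha, ha1, hx, d1, d2, d3⟩ :=
    exists_convex_approx hmp hψ hφ hX hgood (half_pos hε)
  refine ⟨n, fun i => ergComp f η (x i), a, ha, ha1, fun i => ⟨inferInstance, (hx i).1⟩, ?_, ?_, ?_⟩
  · rw [integral_convex_comb ha fun i => (hx i).2.1]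
    linarith
  · rw [integral_convex_comb ha fun i => (hx i).2.2.1]
    linarith
  · by_cases hb : BddAbove (rateSet f η)
    · have h1 : ∑ i, a i * hrate f (ergComp f η (x i)) X
          ≤ ∑ i, a i * ksEntropy f (ergComp f η (x i)) :=
        Finset.sum_le_sum fun i _ => mul_le_mul_of_nonneg_left
          (le_csSup ((hx i).2.2.2 hb) (hXmem _)) (ha i).le
      have h2 := hrate_le_integral_hrate hmp hinv hX
      linarith [(abs_lt.1 d3).2, hXε]
    · -- the supremum of an unbounded set of reals is zero by convention
      have h0 : ksEntropy f η = 0 := Real.sSup_of_not_bddAbove hb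
      rw [h0]
      exact add_nonneg (Finset.sum_nonneg fun i _ => mul_nonneg (ha i).le (ksEntropy_nonneg _)) hε.le
end

section
/- Let d ≥ 1, let A ∈ M_{d×d}({0,1}) be a transition matrix, and let σ : Σ_A → Σ_A be the one-sided subshift of finite type, where Σ_A = { (x_n)_{n∈ℕ₀} ∈ {1,…,d}^{ℕ₀} : A_{x_n, x_{n+1}} = 1 for all n } and the distance is d((x_n)_n,(y_n)_n) = 2^{−N} with N = min{ n ≥ 0 : x_n ≠ y_n }. If σ is transitive (equivalently, for all i,j ∈ {1,…,d} there exists n ≥ 1 with (Aⁿ)_{i,j} ≥ 1), then σ satisfies the gluing orbit property. -/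
/-! The gluing orbit property follows by concatenating admissible words. Since the alphabet is
finite, transitivity gives a uniform bound `Q` on the length of a path joining two given symbols.
Given `ε`, choose `m` with `2⁻ᵐ ≤ ε`; shadowing `xᵢ` up to time `nᵢ` within `ε` only requires
agreement with `xᵢ` on the first `nᵢ + m + 1` symbols. After these symbols a path of length at most
`Q` leads to the first symbol of the next point, so all the gaps are at most `m + Q`.

The concatenation of two points is `exists_glue`; the theorem follows by induction on the
number of points, gluing the first point in front of a point shadowing the others. -/

open MeasureTheory Filter Set
open scoped ENNReal Topology

/-- The one-sided subshift of finite type determined by a 0-1 transition matrix. -/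
abbrev SubshiftSFT (d : ℕ) (A : Matrix (Fin d) (Fin d) ℕ) :=
  {x : ℕ → Fin d // ∀ n, A (x n) (x (n+1)) = 1}

open scoped Classical in
/-- The standard distance `d(x,y) = 2^{-min{n : xₙ ≠ yₙ}}` on a subshift. -/
noncomputable def sftDist {d : ℕ} {A : Matrix (Fin d) (Fin d) ℕ}
    (x y : SubshiftSFT d A) : ℝ :=
  if x = y then 0 else (1/2 : ℝ) ^ (sInf {n : ℕ | x.val n ≠ y.val n})

/-- The shift map on a subshift of finite type. -/
def sftShift {d : ℕ} {A : Matrix (Fin d) (Fin d) ℕ} (x : SubshiftSFT d A) :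
    SubshiftSFT d A :=
  ⟨fun n => x.val (n+1), fun n => x.prop (n+1)⟩

lemma sftShift_iterate_val {d : ℕ} {A : Matrix (Fin d) (Fin d) ℕ} (j : ℕ)
    (x : SubshiftSFT d A) (t : ℕ) : (sftShift^[j] x).val t = x.val (t + j) := by
  induction j generalizing x with
  | zero => rfl
  | succ j ih =>
    rw [Function.iterate_succ_apply, ih]
    change x.val (t + j + 1) = _
    rw [add_assoc]

lemma sftDist_le_of_agree {d : ℕ} {A : Matrix (Fin d) (Fin d) ℕ} (x y : SubshiftSFT d A)
    (m : ℕ) (h : ∀ t < m, x.val t = y.val t) : sftDist x y ≤ (1 / 2 : ℝ) ^ m := by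
  unfold sftDist
  split_ifs with hxy
  · positivity
  · apply pow_le_pow_of_le_one (by norm_num) (by norm_num)
    -- The set is nonempty because `x ≠ y`, so its infimum is not the default value `0`.
    have hne : {n : ℕ | x.val n ≠ y.val n}.Nonempty := by
      by_contra hcon
      rw [Set.not_nonempty_iff_eq_empty] at hcon
      apply hxy
      apply Subtype.ext
      funext t
      by_contra ht
      have : t ∈ {n : ℕ | x.val n ≠ y.val n} := ht
      rw [hcon] at this
      exact this
    have hmem := Nat.sInf_mem hne
    by_contra hlt
    exact hmem (h _ (not_le.mp hlt))

/-- A positive entry of `A ^ n` yields an admissible word of length `n` that can be put in front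
of a point of the subshift. -/
lemma exists_prepend_path {d : ℕ} {A : Matrix (Fin d) (Fin d) ℕ}
    (hA01 : ∀ i j, A i j = 0 ∨ A i j = 1) (n : ℕ) (i : Fin d) (b : SubshiftSFT d A)
    (h : 1 ≤ (A ^ n) i (b.val 0)) :
    ∃ w : SubshiftSFT d A, w.val 0 = i ∧ ∀ t, w.val (t + n) = b.val t := by
  induction n generalizing i with
  | zero =>
    refine ⟨b, ?_, fun t => rfl⟩
    by_contra hne
    rw [pow_zero, Matrix.one_apply_ne (Ne.symm hne)] at h
    omega
  | succ n ih =>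
    rw [pow_succ', Matrix.mul_apply] at h
    obtain ⟨l, -, hl⟩ : ∃ l ∈ Finset.univ, A i l * (A ^ n) l (b.val 0) ≠ 0 :=
      Finset.exists_ne_zero_of_sum_ne_zero (by omega)
    have h1 : A i l = 1 := (hA01 i l).resolve_left (left_ne_zero_of_mul hl)
    obtain ⟨w, hw0, hw⟩ := ih l (Nat.one_le_iff_ne_zero.mpr (right_ne_zero_of_mul hl))
    refine ⟨⟨fun t => Nat.casesOn t i w.val, ?_⟩, rfl, fun t => hw t⟩
    rintro (_ | t)
    · change A i (w.val 0) = 1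
      rw [hw0, h1]
    · exact w.prop t

/-- With a uniform bound `Q` on the transition time, any initial word `a₀ … a_L` of a point can be
followed by any other point. -/
lemma exists_glue {d : ℕ} {A : Matrix (Fin d) (Fin d) ℕ}
    (hA01 : ∀ i j, A i j = 0 ∨ A i j = 1) (Q : ℕ)
    (hQ : ∀ i j : Fin d, ∃ q ≤ Q, 1 ≤ (A ^ q) i j) (a b : SubshiftSFT d A) (L : ℕ) :
    ∃ q ≤ Q, ∃ w : SubshiftSFT d A, (∀ t ≤ L, w.val t = a.val t) ∧
      sftShift^[L + q] w = b := by
  obtain ⟨q, hq, hpos⟩ := hQ (a.val L) (b.val 0)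
  obtain ⟨v, hv0, hv⟩ := exists_prepend_path hA01 q (a.val L) b hpos
  refine ⟨q, hq, ⟨fun t => if t ≤ L then a.val t else v.val (t - L), ?_⟩, ?_, ?_⟩
  · intro t
    rcases lt_trichotomy t L with h | h | h
    · simp only [if_pos h.le, if_pos (Nat.succ_le_of_lt h)]
      exact a.prop t
    · subst h
      simp only [le_refl, if_true, if_neg (Nat.not_succ_le_self t), Nat.add_sub_cancel_left]
      rw [← hv0]
      exact v.prop 0
    · simp only [if_neg (not_le.mpr h), if_neg (not_le.mpr (Nat.lt_succ_of_lt h))]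
      rw [Nat.succ_sub h.le]
      exact v.prop _
  · intro t ht
    simp only [if_pos ht]
  · apply Subtype.ext
    funext t
    rw [sftShift_iterate_val]
    rw [← hv t]
    by_cases h : t + (L + q) ≤ L
    · -- Only possible for `t = q = 0`, where both branches give the symbol `a L`.
      obtain ⟨rfl, rfl⟩ : t = 0 ∧ q = 0 := by omega
      simp [hv0]
    · simp only [if_neg h]
      rw [show t + (L + q) - L = t + q by omega]

/-- every transitive one-sided subshift of finite type satisfies the
gluing orbit property. -/
theorem transitive_sft_has_gluing (d : ℕ) (hd : 1 ≤ d)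
    (A : Matrix (Fin d) (Fin d) ℕ)
    (hA01 : ∀ i j, A i j = 0 ∨ A i j = 1)
    (htrans : ∀ i j : Fin d, ∃ n : ℕ, 1 ≤ n ∧ 1 ≤ (A ^ n) i j) :
    MapGluing (sftDist (d := d) (A := A)) sftShift := by
  choose r hr1 hr using htrans
  obtain ⟨Q, hQ⟩ : ∃ Q : ℕ, ∀ i j : Fin d, ∃ q ≤ Q, 1 ≤ (A ^ q) i j :=
    ⟨∑ i, ∑ j, r i j, fun i j => ⟨r i j,
      (Finset.single_le_sum (f := fun j => r i j) (fun _ _ => Nat.zero_le _)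
        (Finset.mem_univ j)).trans
      (Finset.single_le_sum (f := fun i => ∑ j, r i j) (fun _ _ => Nat.zero_le _)
        (Finset.mem_univ i)), hr i j⟩⟩
  intro ε hε
  obtain ⟨m, hm⟩ := exists_pow_lt_of_lt_one hε (by norm_num : (1 / 2 : ℝ) < 1)
  refine ⟨m + Q + 1, by omega, fun k => ?_⟩
  induction k with
  | zero =>
    intro x n
    refine ⟨fun _ => 0, x 0, fun _ => Nat.zero_le _, fun i j _ => ?_⟩
    obtain rfl : i = 0 := Fin.fin_one_eq_zero i
    simp only [Fin.not_lt_zero, Finset.filter_false, Finset.sum_empty, add_zero]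
    simp [sftDist, hε.le]
  | succ k ih =>
    intro x n
    obtain ⟨p, z, hp, hz⟩ := ih (fun i => x i.succ) (fun i => n i.succ)
    obtain ⟨q, hq, w, hwa, hwz⟩ := exists_glue hA01 Q hQ (x 0) z (n 0 + m)
    refine ⟨Fin.cons (m + q) p, w, ?_, ?_⟩
    · intro i
      refine Fin.cases ?_ (fun i => ?_) i
      · simp only [Fin.cons_zero]
        omega
      · simpa only [Fin.cons_succ] using hp i
    · intro i
      refine Fin.cases ?_ (fun i => ?_) i
      · intro j hj
        simp only [Fin.not_lt_zero, Finset.filter_false, Finset.sum_empty, add_zero]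
        refine (sftDist_le_of_agree _ _ m fun t ht => ?_).trans hm.le
        rw [sftShift_iterate_val, sftShift_iterate_val]
        exact hwa _ (by omega)
      · intro j hj
        have hsum : ∑ l ∈ Finset.univ.filter (fun l => l < i.succ),
            (n l + (Fin.cons (m + q) p : Fin (k + 1 + 1) → ℕ) l)
            = (∑ l ∈ Finset.univ.filter (fun l => l < i), (n l.succ + p l))
              + (n 0 + m + q) := by
          rw [Finset.sum_filter, Finset.sum_filter, Fin.sum_univ_succ]
          simp only [Fin.succ_pos, if_true, Fin.cons_zero, Fin.cons_succ, Fin.succ_lt_succ_iff]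
          ring
        rw [hsum, ← add_assoc, Function.iterate_add_apply, hwz]
        exact hz i j hj
end
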